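/- arXiv:2005.09706 — 4 statements merged into one kernel-verified Lean document; each statement's English description precedes it below -/
import Mathlib

section
/- Let q be a prime power, F the finite field with q² elements, and F(v) = v₁^{q+1} − v₂^q·v₃ − v₃^q·v₂ for v ∈ F³. Let Z be the set of points of the projective plane ℙ(F³) represented by nonzero v with F(v) = 0 (well-defined since F is homogeneous), and let G be the group of invertible 3×3 matrices M over F for which there exists a nonzero c ∈ F with F(M·x) = c·F(x) for all x ∈ F³. Then G acts on Z through the induced projective maps, and the number of orbits of G on the collection of 3-element subsets of Z equals 1 + ⌈q/2⌉. Moreover, the collinear 3-element subsets of Z (those contained in a projective line) form a single orbit. -/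
/-!
Write `σ x = x ^ q`. The curve is the set of isotropic points of the nondegenerate Hermitian form
`H(u,v) = u₀ σ(v₀) - u₁ σ(v₂) - u₂ σ(v₁)`, and polarization (`IsSim.hForm_mulVec`) shows that its
automorphisms are the similitudes of `H`. Distinct isotropic points are never orthogonal
(`prop_of_hForm_eq_zero`), so an ordered triangle has a nonzero triple product
`τ = H(u,v) H(v,w) H(w,u)`. Rescaling the vectors, or applying a similitude, multiplies `τ` by an
element fixed by `σ`; hence `ω = σ(τ) / τ`, an element of norm one, is an invariant of ordered
triangles.

It is a complete invariant (`exists_sim`): a similitude brings the first two points to `(0,1,0)`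
and `(0,0,1)` and the third to some `(t,1,s)` with `t σ(t) = s + σ(s)`, where `ω = σ(s) / s`, and a
diagonal similitude then adjusts `(t,s)` by surjectivity of the norm. Every `ω` of norm one occurs,
by Hilbert 90 and surjectivity of the norm again (`exists_triangle`). Permuting the three points
fixes or inverts `ω`, so unordered triangles are classified by `ω + ω⁻¹`. The elements of norm one
form a cyclic group of order `q + 1`, which has `1 + ⌊(q + 1) / 2⌋ = 1 + ⌈q / 2⌉` classes modulo
inversion (`ncard_trace`).

The Gram determinant `τ + σ(τ)` of an isotropic triple vanishes exactly when the vectors are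
dependent (`det_norm`), that is, the collinear triangles are those with `ω = -1`. As `-1` is its own
inverse, they form one orbit.
-/

/-- The defining form of the Hermitian curve: F(v) = v₀^{q+1} − v₁^q·v₂ − v₂^q·v₁. -/
def hermF (q : ℕ) {F : Type*} [Field F] (v : Fin 3 → F) : F :=
  v 0 ^ (q + 1) - v 1 ^ q * v 2 - v 2 ^ q * v 1

/-- The set of Hermitian triangles: 3-element subsets of the zero locus of F in
the projective plane (F is homogeneous, so vanishing on a representative is
well-defined on projective points). -/
def hermTri (q : ℕ) (F : Type*) [Field F] : Set (Finset (Projectivization F (Fin 3 → F))) :=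
  {T | T.card = 3 ∧ ∀ P ∈ T, hermF q (Projectivization.rep P) = 0}

/-- T' is the image of T under an automorphism of the Hermitian curve, i.e.,
under the projective map induced by an invertible matrix M preserving F up to
a nonzero scalar: P' is the image of P precisely when a representative of P'
is a scalar multiple of M applied to a representative of P. -/
def hermRel (q : ℕ) {F : Type*} [Field F]
    (T T' : Finset (Projectivization F (Fin 3 → F))) : Prop :=
  ∃ M : Matrix (Fin 3) (Fin 3) F, IsUnit M ∧
    (∃ c : F, c ≠ 0 ∧ ∀ x : Fin 3 → F, hermF q (M.mulVec x) = c * hermF q x) ∧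
    ∀ P' : Projectivization F (Fin 3 → F),
      P' ∈ T' ↔ ∃ P ∈ T, ∃ a : F,
        Projectivization.rep P' = a • M.mulVec (Projectivization.rep P)

/-- A triangle is collinear if its points lie on a projective line, i.e., all
representatives lie in a 2-dimensional subspace. -/
def hermCollinear (F : Type*) [Field F]
    (T : Finset (Projectivization F (Fin 3 → F))) : Prop :=
  ∃ W : Submodule F (Fin 3 → F), Module.finrank F W = 2 ∧
    ∀ P ∈ T, Projectivization.rep P ∈ W

open Matrix

/-! ### The Hermitian form, its similitudes and the angular invariant -/

section Form

variable {F : Type*} [Field F]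

/-- The sesquilinear form attached to the conjugation `σ`; for `σ x = x ^ q` its values on the
diagonal are those of `hermF q`. -/
def hForm (σ : F →+* F) (u v : Fin 3 → F) : F :=
  u 0 * σ (v 0) - u 1 * σ (v 2) - u 2 * σ (v 1)

/-- `M` is a similitude of the Hermitian form: an invertible matrix preserving the form up to a
nonzero scalar. -/
def IsSim (σ : F →+* F) (M : Matrix (Fin 3) (Fin 3) F) : Prop :=
  IsUnit M ∧ ∃ c : F, c ≠ 0 ∧ ∀ x, hForm σ (M *ᵥ x) (M *ᵥ x) = c * hForm σ x x

/-- The triple product `H(u,v) H(v,w) H(w,u)`. Rescaling a vector changes it by a norm, which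
is fixed by `σ`. -/
def triple (σ : F →+* F) (u v w : Fin 3 → F) : F :=
  hForm σ u v * hForm σ v w * hForm σ w u

/-- The angular invariant `σ(τ) / τ` of an ordered triple of isotropic vectors, `τ` being the
triple product; for `σ x = x ^ q` it is `τ ^ (q - 1)`. -/
def omegaInv (σ : F →+* F) (u v w : Fin 3 → F) : F :=
  σ (triple σ u v w) / triple σ u v w

lemma hForm_conj {σ : F →+* F} (hσ : ∀ x, σ (σ x) = x) (u v : Fin 3 → F) :
    σ (hForm σ u v) = hForm σ v u := by
  simp only [hForm, map_sub, map_mul, hσ]; ring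

lemma hForm_smul (σ : F →+* F) (a b : F) (u v : Fin 3 → F) :
    hForm σ (a • u) (b • v) = a * σ b * hForm σ u v := by
  simp only [hForm, Pi.smul_apply, smul_eq_mul, map_mul]; ring

lemma hForm_add_left (σ : F →+* F) (u u' v : Fin 3 → F) :
    hForm σ (u + u') v = hForm σ u v + hForm σ u' v := by
  simp only [hForm, Pi.add_apply]; ring

lemma hForm_add_right (σ : F →+* F) (u v v' : Fin 3 → F) :
    hForm σ u (v + v') = hForm σ u v + hForm σ u v' := by
  simp only [hForm, Pi.add_apply, map_add]; ring

/-- The form has Witt index one: orthogonal isotropic vectors are proportional. Indeed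
`v₁ u - u₁ v` is isotropic with vanishing second coordinate and orthogonal to `u` and `v`. -/
lemma prop_of_hForm_eq_zero {σ : F →+* F} (hσ : ∀ x, σ (σ x) = x) {u v : Fin 3 → F}
    (hv : v ≠ 0) (huu : hForm σ u u = 0) (hvv : hForm σ v v = 0)
    (huv : hForm σ u v = 0) : ∃ a : F, u = a • v := by
  have hvu : hForm σ v u = 0 := by rw [← hForm_conj hσ, huv, map_zero]
  have key : ∀ x : Fin 3 → F, hForm σ x x = 0 → x 1 = 0 → x 0 = 0 := by
    intro x hx h1
    have : x 0 * σ (x 0) = 0 := by simpa [hForm, h1] using hx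
    rcases mul_eq_zero.1 this with h | h
    · exact h
    · exact (map_eq_zero σ).1 h
  have vec : ∀ x : Fin 3 → F, x 0 = 0 → x 1 = 0 → x 2 = 0 → x = 0 := by
    intro x h0 h1 h2
    funext i; fin_cases i <;> simp [h0, h1, h2]
  by_cases hv1 : v 1 = 0
  · have hv0 := key v hvv hv1
    have hv2 : v 2 ≠ 0 := fun h => hv (vec v hv0 hv1 h)
    have hu1 : u 1 = 0 := by
      have : u 1 * σ (v 2) = 0 := by simpa [hForm, hv0, hv1] using huv
      rcases mul_eq_zero.1 this with h | h
      · exact h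
      · exact absurd ((map_eq_zero σ).1 h) hv2
    have hu0 := key u huu hu1
    refine ⟨u 2 / v 2, ?_⟩
    funext i; fin_cases i <;> simp [hu0, hu1, hv0, hv1, hv2]
  · set z : Fin 3 → F := v 1 • u + (-u 1) • v with hz
    have hz1 : z 1 = 0 := by simp [hz]; ring
    have hzv : hForm σ z v = 0 := by
      rw [hz, hForm_add_left]
      have h1 := hForm_smul σ (v 1) 1 u v
      have h2 := hForm_smul σ (-u 1) 1 v v
      simp only [one_smul] at h1 h2
      rw [h1, h2, huv, hvv]; ring
    have hzz : hForm σ z z = 0 := by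
      rw [hz]
      simp only [hForm_add_left, hForm_add_right, hForm_smul, huu, hvv, huv, hvu]; ring
    have hz0 := key z hzz hz1
    have hz2 : z 2 = 0 := by
      have : z 2 * σ (v 1) = 0 := by simpa [hForm, hz0, hz1] using hzv
      rcases mul_eq_zero.1 this with h | h
      · exact h
      · exact absurd ((map_eq_zero σ).1 h) hv1
    have hzero := vec z hz0 hz1 hz2
    refine ⟨u 1 / v 1, ?_⟩
    funext i
    have := congrFun hzero i
    simp only [hz, Pi.add_apply, Pi.smul_apply, smul_eq_mul, Pi.zero_apply] at this
    simp only [Pi.smul_apply, smul_eq_mul]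
    field_simp
    linear_combination this

/-- Polarization: a similitude, defined on the diagonal of the form, scales the whole
sesquilinear form. The defect is skew-Hermitian and linear on the left, hence killed by
`a - σ a` for all `a`. -/
lemma IsSim.hForm_mulVec {σ : F →+* F} (hσ : ∀ x, σ (σ x) = x) (hne : ∃ a, σ a ≠ a)
    {M : Matrix (Fin 3) (Fin 3) F} {c : F}
    (hM : ∀ x, hForm σ (M *ᵥ x) (M *ᵥ x) = c * hForm σ x x) :
    σ c = c ∧ ∀ x y, hForm σ (M *ᵥ x) (M *ᵥ y) = c * hForm σ x y := by
  have hc : σ c = c := by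
    have h := hM ![1, 0, 0]
    have h1 : hForm σ ![1, 0, 0] ![1, 0, 0] = 1 := by simp [hForm]
    rw [h1, mul_one] at h
    rw [← h, hForm_conj hσ]
  refine ⟨hc, fun x y => ?_⟩
  obtain ⟨a, ha⟩ := hne
  have skew : ∀ x y, (hForm σ (M *ᵥ x) (M *ᵥ y) - c * hForm σ x y)
      + (hForm σ (M *ᵥ y) (M *ᵥ x) - c * hForm σ y x) = 0 := by
    intro x y
    have h := hM (x + y)
    simp only [mulVec_add, hForm_add_left, hForm_add_right] at h
    linear_combination h - hM x - hM y
  have h1 := skew x y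
  have h2 := skew (a • x) y
  have e1 : ∀ u v : Fin 3 → F, hForm σ (a • u) v = a * hForm σ u v := fun u v => by
    simpa using hForm_smul σ a 1 u v
  have e2 : ∀ u v : Fin 3 → F, hForm σ v (a • u) = σ a * hForm σ v u := fun u v => by
    simpa using hForm_smul σ 1 a v u
  simp only [mulVec_smul, e1, e2] at h2
  have h3 : (a - σ a) * (hForm σ (M *ᵥ x) (M *ᵥ y) - c * hForm σ x y) = 0 := by
    linear_combination h2 - σ a * h1
  rcases mul_eq_zero.1 h3 with h | h
  · exact absurd (sub_eq_zero.1 h).symm ha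
  · exact sub_eq_zero.1 h

lemma IsSim.mul {σ : F →+* F} {M N : Matrix (Fin 3) (Fin 3) F} (hM : IsSim σ M)
    (hN : IsSim σ N) : IsSim σ (M * N) := by
  obtain ⟨hMu, c, hc, hMc⟩ := hM
  obtain ⟨hNu, d, hd, hNd⟩ := hN
  refine ⟨hMu.mul hNu, c * d, mul_ne_zero hc hd, fun x => ?_⟩
  rw [← mulVec_mulVec, hMc, hNd, mul_assoc]

lemma IsSim.inv {σ : F →+* F} {M : Matrix (Fin 3) (Fin 3) F} (hM : IsSim σ M) :
    IsSim σ M⁻¹ := by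
  obtain ⟨hMu, c, hc, hMc⟩ := hM
  have hdet : IsUnit M.det := (Matrix.isUnit_iff_isUnit_det M).1 hMu
  refine ⟨(Matrix.isUnit_nonsing_inv_iff).2 hMu, c⁻¹, inv_ne_zero hc, fun x => ?_⟩
  have := hMc (M⁻¹ *ᵥ x)
  rw [mulVec_mulVec, Matrix.mul_nonsing_inv M hdet, one_mulVec] at this
  rw [this]; field_simp

lemma IsSim.mulVec_ne_zero {σ : F →+* F} {M : Matrix (Fin 3) (Fin 3) F} (hM : IsSim σ M)
    {x : Fin 3 → F} (hx : x ≠ 0) : M *ᵥ x ≠ 0 := fun h =>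
  hx (Matrix.mulVec_injective_of_isUnit hM.1 (by rw [h, mulVec_zero]))

lemma omegaInv_cycle (σ : F →+* F) (u v w : Fin 3 → F) :
    omegaInv σ v w u = omegaInv σ u v w := by
  have : triple σ v w u = triple σ u v w := by simp only [triple]; ring
  rw [omegaInv, omegaInv, this]

lemma omegaInv_swap {σ : F →+* F} (hσ : ∀ x, σ (σ x) = x) (u v w : Fin 3 → F) :
    omegaInv σ v u w = (omegaInv σ u v w)⁻¹ := by
  have : triple σ v u w = σ (triple σ u v w) := by
    simp only [triple, map_mul, hForm_conj hσ]; ring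
  rw [omegaInv, omegaInv, this, hσ, inv_div]

lemma omegaInv_norm {σ : F →+* F} (hσ : ∀ x, σ (σ x) = x) {u v w : Fin 3 → F}
    (h : triple σ u v w ≠ 0) : omegaInv σ u v w * σ (omegaInv σ u v w) = 1 := by
  have h' : σ (triple σ u v w) ≠ 0 := (map_ne_zero σ).2 h
  rw [omegaInv, map_div₀, hσ]; field_simp

lemma omegaInv_smul {σ : F →+* F} (hσ : ∀ x, σ (σ x) = x) {a b c : F} (ha : a ≠ 0)
    (hb : b ≠ 0) (hc : c ≠ 0) (u v w : Fin 3 → F) :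
    omegaInv σ (a • u) (b • v) (c • w) = omegaInv σ u v w := by
  have h : triple σ (a • u) (b • v) (c • w)
      = (a * σ a) * (b * σ b) * (c * σ c) * triple σ u v w := by
    simp only [triple, hForm_smul]; ring
  have h' : (a * σ a) * (b * σ b) * (c * σ c) ≠ 0 := by simp [ha, hb, hc]
  have hfix : σ ((a * σ a) * (b * σ b) * (c * σ c)) = (a * σ a) * (b * σ b) * (c * σ c) := by
    simp only [map_mul, hσ]; ring
  rw [omegaInv, omegaInv, h, map_mul, hfix, mul_div_mul_left _ _ h']

lemma omegaInv_sim {σ : F →+* F} (hσ : ∀ x, σ (σ x) = x) (hne : ∃ a, σ a ≠ a)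
    {M : Matrix (Fin 3) (Fin 3) F} (hM : IsSim σ M) (u v w : Fin 3 → F) :
    omegaInv σ (M *ᵥ u) (M *ᵥ v) (M *ᵥ w) = omegaInv σ u v w := by
  obtain ⟨-, c, hc, hMc⟩ := hM
  obtain ⟨hfix, hH⟩ := IsSim.hForm_mulVec hσ hne hMc
  have h : triple σ (M *ᵥ u) (M *ᵥ v) (M *ᵥ w) = c ^ 3 * triple σ u v w := by
    simp only [triple, hH]; ring
  rw [omegaInv, omegaInv, h, map_mul, map_pow, hfix, mul_div_mul_left _ _ (pow_ne_zero 3 hc)]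

/-- The Gram determinant of three isotropic vectors is `τ + σ τ`; it is minus the norm of the
determinant of the vectors. -/
lemma det_norm {σ : F →+* F} (hσ : ∀ x, σ (σ x) = x) {u v w : Fin 3 → F}
    (hu : hForm σ u u = 0) (hv : hForm σ v v = 0) (hw : hForm σ w w = 0) :
    Matrix.det (Matrix.of ![u, v, w]) * σ (Matrix.det (Matrix.of ![u, v, w]))
      = -(triple σ u v w + σ (triple σ u v w)) := by
  have h : Matrix.det (Matrix.of ![u, v, w]) * σ (Matrix.det (Matrix.of ![u, v, w]))
      = -(triple σ u v w + hForm σ v u * hForm σ w v * hForm σ u w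
        + hForm σ u u * hForm σ v v * hForm σ w w
        - hForm σ u u * hForm σ v w * hForm σ w v
        - hForm σ v v * hForm σ u w * hForm σ w u
        - hForm σ w w * hForm σ u v * hForm σ v u) := by
    simp only [Matrix.det_fin_three, triple, hForm, Matrix.of_apply, Matrix.cons_val_zero,
      Matrix.cons_val_one, Matrix.cons_val, map_add, map_sub, map_mul]
    ring
  rw [h, hu, hv, hw]
  simp only [triple, map_mul, hForm_conj hσ]; ring

lemma omegaInv_eq_neg_one_iff {σ : F →+* F} (hσ : ∀ x, σ (σ x) = x) {u v w : Fin 3 → F}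
    (hu : hForm σ u u = 0) (hv : hForm σ v v = 0) (hw : hForm σ w w = 0)
    (h : triple σ u v w ≠ 0) :
    omegaInv σ u v w = -1 ↔ Matrix.det (Matrix.of ![u, v, w]) = 0 := by
  have hd := det_norm hσ hu hv hw
  rw [omegaInv, div_eq_iff h]
  constructor
  · intro h1
    rw [h1] at hd
    have : Matrix.det (Matrix.of ![u, v, w]) * σ (Matrix.det (Matrix.of ![u, v, w])) = 0 := by
      rw [hd]; ring
    rcases mul_eq_zero.1 this with h | h
    · exact h
    · exact (map_eq_zero σ).1 h
  · intro h1
    rw [h1, zero_mul] at hd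
    linear_combination hd

end Form

/-! ### Equivalence of ordered triples -/

section Transitivity

variable {F : Type*} [Field F]

/-- Every triple of isotropic vectors, pairwise non-orthogonal, is the image under a similitude
of a triple `(0,1,0)`, `(0,0,1)`, `(t,1,s)`, up to scaling. The first column of the matrix is a
vector `n` orthogonal to `u` and `v`; no normalization of `H(n,n)` is needed since a similitude
may rescale the form. -/
lemma exists_normal_form {σ : F →+* F} (hσ : ∀ x, σ (σ x) = x) (hne : ∃ a, σ a ≠ a)
    {u v w : Fin 3 → F}
    (hu : hForm σ u u = 0) (hv : hForm σ v v = 0) (hw : hForm σ w w = 0)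
    (hτ : triple σ u v w ≠ 0) :
    ∃ M, IsSim σ M ∧ ∃ t s α β γ : F, s ≠ 0 ∧ t * σ t = s + σ s ∧ α ≠ 0 ∧ β ≠ 0 ∧ γ ≠ 0 ∧
      M *ᵥ ![0, 1, 0] = α • u ∧ M *ᵥ ![0, 0, 1] = β • v ∧ M *ᵥ ![t, 1, s] = γ • w := by
  have huv : hForm σ u v ≠ 0 := fun h => hτ (by simp [triple, h])
  have hvw : hForm σ v w ≠ 0 := fun h => hτ (by simp [triple, h])
  have hwu : hForm σ w u ≠ 0 := fun h => hτ (by simp [triple, h])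
  have hvu : hForm σ v u ≠ 0 := by rw [← hForm_conj hσ]; simpa using huv
  have hwv : hForm σ w v ≠ 0 := by rw [← hForm_conj hσ]; simpa using hvw
  obtain ⟨n, hnu, hnv, hnn⟩ : ∃ n : Fin 3 → F, hForm σ n u = 0 ∧ hForm σ n v = 0 ∧
      hForm σ n n ≠ 0 := by
    -- the cross product of the linear forms `H(·,u)` and `H(·,v)`
    let n : Fin 3 → F := ![σ (u 2) * σ (v 1) - σ (u 1) * σ (v 2),
      σ (u 0) * σ (v 1) - σ (u 1) * σ (v 0), σ (u 2) * σ (v 0) - σ (u 0) * σ (v 2)]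
    have h0 : n 0 = σ (u 2) * σ (v 1) - σ (u 1) * σ (v 2) := rfl
    have h1 : n 1 = σ (u 0) * σ (v 1) - σ (u 1) * σ (v 0) := rfl
    have h2 : n 2 = σ (u 2) * σ (v 0) - σ (u 0) * σ (v 2) := rfl
    refine ⟨n, ?_, ?_, ?_⟩
    · simp only [hForm, h0, h1, h2]; ring
    · simp only [hForm, h0, h1, h2]; ring
    · have : hForm σ n n = hForm σ u v * hForm σ v u - hForm σ u u * hForm σ v v := by
        simp only [hForm, h0, h1, h2, map_sub, map_mul, hσ]; ring
      rw [this, hu, hv]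
      simpa using ⟨huv, hvu⟩
  set c := hForm σ n n with hc
  have hcc : σ c = c := hForm_conj hσ n n
  set b : F := -c / hForm σ u v with hb
  have hb0 : b ≠ 0 := div_ne_zero (neg_ne_zero.2 hnn) huv
  set u' : Fin 3 → F := b • u with hu'
  have h1 : ∀ x y : Fin 3 → F, hForm σ (b • x) y = b * hForm σ x y := fun x y => by
    simpa using hForm_smul σ b 1 x y
  have hu'v : hForm σ u' v = -c := by rw [hu', h1, hb]; field_simp
  have hvu' : hForm σ v u' = -c := by rw [← hForm_conj hσ, hu'v, map_neg, hcc]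
  have hu'u' : hForm σ u' u' = 0 := by rw [hu', hForm_smul, hu, mul_zero]
  have hu'n : hForm σ u' n = 0 := by
    rw [hu', h1, ← hForm_conj hσ, hnu, map_zero, mul_zero]
  have hvn : hForm σ v n = 0 := by rw [← hForm_conj hσ, hnv, map_zero]
  have hnu' : hForm σ n u' = 0 := by rw [← hForm_conj hσ, hu'n, map_zero]
  let M : Matrix (Fin 3) (Fin 3) F := (Matrix.of ![n, u', v])ᵀ
  have hMx : ∀ x, M *ᵥ x = x 0 • n + x 1 • u' + x 2 • v := by
    intro x
    funext i
    simp [M, mulVec, dotProduct, Fin.sum_univ_three]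
    ring
  have hform : ∀ x, hForm σ (M *ᵥ x) (M *ᵥ x) = c * hForm σ x x := by
    intro x
    rw [hMx]
    simp only [hForm_add_left, hForm_add_right, hForm_smul, hnu', hu'n, hnv, hvn, hu'u', hv,
      hu'v, hvu', ← hc]
    simp only [hForm]; ring
  have hunit : IsUnit M := by
    refine Matrix.mulVec_injective_iff_isUnit.1 ?_
    intro x y hxy
    have hz : M *ᵥ (x - y) = 0 := by rw [mulVec_sub]; exact sub_eq_zero.2 hxy
    obtain ⟨-, hH⟩ := IsSim.hForm_mulVec hσ hne hform
    have hall : ∀ z, hForm σ (x - y) z = 0 := by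
      intro z
      have := hH (x - y) z
      rw [hz] at this
      have h0 : hForm σ 0 (M *ᵥ z) = 0 := by simp [hForm]
      rw [h0] at this
      exact (mul_eq_zero.1 this.symm).resolve_left hnn
    have a0 := hall ![1, 0, 0]
    have a1 := hall ![0, 0, 1]
    have a2 := hall ![0, 1, 0]
    simp [hForm] at a0 a1 a2
    funext i
    fin_cases i
    · exact sub_eq_zero.1 a0
    · exact (sub_eq_zero.1 a1).symm
    · exact (sub_eq_zero.1 a2).symm
  have hsim : IsSim σ M := ⟨hunit, c, hnn, hform⟩
  obtain ⟨hc', hH⟩ := IsSim.hForm_mulVec hσ hne hform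
  have e1 : M *ᵥ ![0, 1, 0] = u' := by rw [hMx]; simp
  have e2 : M *ᵥ ![0, 0, 1] = v := by rw [hMx]; simp
  obtain ⟨x, hx⟩ : ∃ x, M *ᵥ x = w := ⟨M⁻¹ *ᵥ w, by
    rw [mulVec_mulVec, Matrix.mul_nonsing_inv M ((Matrix.isUnit_iff_isUnit_det M).1 hunit),
      one_mulVec]⟩
  have hx1 : x 1 ≠ 0 := by
    intro h
    apply hwv
    rw [← hx, ← e2, hH]
    simp [hForm, h]
  have hx2 : x 2 ≠ 0 := by
    intro h
    have : hForm σ w u' = 0 := by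
      rw [← hx, ← e1, hH]
      simp [hForm, h]
    have h2 : hForm σ w u' = σ b * hForm σ w u := by simpa using hForm_smul σ 1 b w u
    rw [h2] at this
    rcases mul_eq_zero.1 this with h | h
    · exact hb0 ((map_eq_zero σ).1 h)
    · exact hwu h
  have hxx : hForm σ x x = 0 := by
    have := hform x
    rw [hx, hw] at this
    exact (mul_eq_zero.1 this.symm).resolve_left hnn
  have hvec : ![x 0 / x 1, 1, x 2 / x 1] = (x 1)⁻¹ • x := by
    funext i
    fin_cases i <;> simp [hx1, div_eq_inv_mul]
  refine ⟨M, hsim, x 0 / x 1, x 2 / x 1, b, 1, (x 1)⁻¹, div_ne_zero hx2 hx1, ?_, hb0, one_ne_zero,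
    inv_ne_zero hx1, e1, by rw [e2, one_smul], ?_⟩
  · have h1 : σ (x 1) ≠ 0 := (map_ne_zero σ).2 hx1
    simp only [hForm] at hxx
    simp only [map_div₀]
    field_simp
    linear_combination hxx
  · rw [hvec, mulVec_smul, hx]

/-- The triple product of the normal form is `-s`. -/
lemma triple_normal (σ : F →+* F) (t s : F) :
    triple σ ![0, 1, 0] ![0, 0, 1] ![t, 1, s] = -s := by
  simp [triple, hForm]

/-- The stabilizer of the points `(0,1,0)` and `(0,0,1)` identifies two normal forms with the same
angular invariant. -/
lemma exists_diag {σ : F →+* F}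
    (hN : ∀ y, σ y = y → ∃ x, x * σ x = y) {t s t' s' : F} (hs : s ≠ 0) (hs' : s' ≠ 0)
    (h : t * σ t = s + σ s) (h' : t' * σ t' = s' + σ s') (hss : σ s / s = σ s' / s') :
    ∃ D, IsSim σ D ∧ ∃ r : F, r ≠ 0 ∧ D *ᵥ ![0, 1, 0] = ![0, 1, 0] ∧
      D *ᵥ ![0, 0, 1] = r • ![0, 0, 1] ∧ D *ᵥ ![t, 1, s] = ![t', 1, s'] := by
  have hσs : σ s ≠ 0 := (map_ne_zero σ).2 hs
  set r := s' / s with hr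
  have hr0 : r ≠ 0 := div_ne_zero hs' hs
  have hrs : r * s = s' := by rw [hr]; field_simp
  have hσr : σ r = r := by
    rw [hr, map_div₀]
    rw [div_eq_div_iff hs hs'] at hss
    rw [div_eq_div_iff hσs hs]
    linear_combination -hss
  have htt : t' * σ t' = r * (t * σ t) := by
    rw [h, h', ← hrs, map_mul, hσr]; ring
  obtain ⟨a, ha, hat⟩ : ∃ a, a * σ a = r ∧ a * t = t' := by
    by_cases ht : t = 0
    · obtain ⟨a, ha⟩ := hN r hσr
      refine ⟨a, ha, ?_⟩
      rw [ht, zero_mul, mul_zero] at htt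
      rcases mul_eq_zero.1 htt with h0 | h0
      · rw [ht, h0, mul_zero]
      · rw [ht, (map_eq_zero σ).1 h0, mul_zero]
    · have : σ t ≠ 0 := (map_ne_zero σ).2 ht
      refine ⟨t' / t, ?_, by field_simp⟩
      rw [map_div₀]
      field_simp
      linear_combination htt
  have ha0 : a ≠ 0 := by
    rintro rfl
    exact hr0 (by rw [← ha]; simp)
  have hD : ∀ x : Fin 3 → F, (Matrix.diagonal ![a, 1, r]) *ᵥ x = ![a * x 0, x 1, r * x 2] := by
    intro x
    funext i
    rw [mulVec_diagonal]
    fin_cases i <;> simp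
  refine ⟨Matrix.diagonal ![a, 1, r], ⟨?_, r, hr0, ?_⟩, r, hr0, ?_, ?_, ?_⟩
  · rw [Matrix.isUnit_iff_isUnit_det, Matrix.det_diagonal, isUnit_iff_ne_zero]
    simp [Fin.prod_univ_three, ha0, hr0]
  · intro x
    rw [hD]
    simp only [hForm, Matrix.cons_val_zero, Matrix.cons_val_one, Matrix.cons_val, map_mul, hσr]
    linear_combination (x 0 * σ (x 0)) * ha
  · rw [hD]; simp
  · rw [hD]; simp
  · rw [hD]; simp [hat, hrs]

/-- Ordered triples of isotropic vectors with equal angular invariants are equivalent. -/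
lemma exists_sim {σ : F →+* F} (hσ : ∀ x, σ (σ x) = x) (hne : ∃ a, σ a ≠ a)
    (hN : ∀ y, σ y = y → ∃ x, x * σ x = y) {u v w u' v' w' : Fin 3 → F}
    (hu : hForm σ u u = 0) (hv : hForm σ v v = 0) (hw : hForm σ w w = 0)
    (hτ : triple σ u v w ≠ 0)
    (hu' : hForm σ u' u' = 0) (hv' : hForm σ v' v' = 0) (hw' : hForm σ w' w' = 0)
    (hτ' : triple σ u' v' w' ≠ 0) (hω : omegaInv σ u v w = omegaInv σ u' v' w') :
    ∃ M, IsSim σ M ∧ (∃ a : F, u' = a • M *ᵥ u) ∧ (∃ a : F, v' = a • M *ᵥ v) ∧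
      (∃ a : F, w' = a • M *ᵥ w) := by
  obtain ⟨M, hM, t, s, α, β, γ, hs, hts, hα, hβ, hγ, h1, h2, h3⟩ :=
    exists_normal_form hσ hne hu hv hw hτ
  obtain ⟨M', hM', t', s', α', β', γ', hs', hts', hα', hβ', hγ', h1', h2', h3'⟩ :=
    exists_normal_form hσ hne hu' hv' hw' hτ'
  have o : omegaInv σ u v w = σ s / s := by
    rw [← omegaInv_smul hσ hα hβ hγ, ← h1, ← h2, ← h3, omegaInv_sim hσ hne hM, omegaInv,
      triple_normal, map_neg, neg_div_neg_eq]
  have o' : omegaInv σ u' v' w' = σ s' / s' := by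
    rw [← omegaInv_smul hσ hα' hβ' hγ', ← h1', ← h2', ← h3', omegaInv_sim hσ hne hM', omegaInv,
      triple_normal, map_neg, neg_div_neg_eq]
  obtain ⟨D, hD, r, hr, d1, d2, d3⟩ := exists_diag hN hs hs' hts hts' (by rw [← o, ← o', hω])
  have key : ∀ (x x' e e' : Fin 3 → F) (a a' b : F), a ≠ 0 → a' ≠ 0 → b ≠ 0 →
      M *ᵥ e = a • x → M' *ᵥ e' = a' • x' → D *ᵥ e = b • e' →
      ∃ d : F, x' = d • (M' * D * M⁻¹) *ᵥ x := by
    intro x x' e e' a a' b ha ha' hb he he' hd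
    have hinv : M⁻¹ *ᵥ x = a⁻¹ • e := by
      have : x = a⁻¹ • M *ᵥ e := by rw [he, smul_smul, inv_mul_cancel₀ ha, one_smul]
      rw [this, mulVec_smul, mulVec_mulVec,
        Matrix.nonsing_inv_mul M ((Matrix.isUnit_iff_isUnit_det M).1 hM.1), one_mulVec]
    refine ⟨a * b⁻¹ * a'⁻¹, ?_⟩
    rw [← mulVec_mulVec, ← mulVec_mulVec, hinv, mulVec_smul, mulVec_smul, hd, mulVec_smul, he',
      smul_smul, smul_smul, smul_smul]
    have : a * b⁻¹ * a'⁻¹ * a⁻¹ * b * a' = 1 := by field_simp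
    rw [this, one_smul]
  exact ⟨M' * D * M⁻¹, (hM'.mul hD).mul hM.inv,
    key _ _ _ _ _ _ 1 hα hα' one_ne_zero h1 h1' (by rw [d1, one_smul]),
    key _ _ _ _ _ _ r hβ hβ' hr h2 h2' d2,
    key _ _ _ _ _ _ 1 hγ hγ' one_ne_zero h3 h3' (by rw [d3, one_smul])⟩

/-- Hilbert 90 for the conjugation `σ`. -/
lemma hilbert90 {σ : F →+* F} (hσ : ∀ x, σ (σ x) = x) (hne : ∃ a, σ a ≠ a) (x : F)
    (hx : x * σ x = 1) : ∃ s, s ≠ 0 ∧ σ s / s = x := by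
  suffices h : ∃ b, b + σ x * σ b ≠ 0 by
    obtain ⟨b, hb⟩ := h
    refine ⟨_, hb, ?_⟩
    rw [div_eq_iff hb, map_add, map_mul, hσ, hσ]
    linear_combination -(σ b) * hx
  by_contra! h
  obtain ⟨a, ha⟩ := hne
  have h1 := h 1
  rw [map_one, mul_one] at h1
  apply ha
  linear_combination -(h a) + σ a * h1

end Transitivity

/-! ### The field with `q ^ 2` elements -/

section FiniteField

variable {F : Type*} [Field F] [Fintype F]

/-- The conjugation `x ↦ x ^ q` of a field with `q ^ 2` elements. -/
lemma exists_conj {q : ℕ} (hq : IsPrimePow q) (hcard : Fintype.card F = q ^ 2) :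
    ∃ σ : F →+* F, ∀ x, σ x = x ^ q := by
  obtain ⟨p, n, hp, hn, rfl⟩ := hq
  have hp' := hp.nat_prime
  have : Fact p.Prime := ⟨hp'⟩
  obtain ⟨p', hp', m, hpm, hc⟩ := FiniteField.card' F
  have : p = p' := by
    have h : p ∣ p' ^ (m : ℕ) := by
      rw [← hc, hcard, ← pow_mul]
      exact dvd_pow_self p (by omega)
    exact (Nat.prime_dvd_prime_iff_eq hp.nat_prime hpm).1 (hp.nat_prime.dvd_of_dvd_pow h)
  subst this
  exact ⟨iterateFrobenius F p n, fun x => by rw [iterateFrobenius_def]⟩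

lemma exists_primitive {q : ℕ} (hq : 1 < q) (hcard : Fintype.card F = q ^ 2) :
    ∃ g : F, IsPrimitiveRoot g ((q - 1) * (q + 1)) ∧ ∀ x : F, x ≠ 0 → ∃ k : ℕ, x = g ^ k := by
  classical
  obtain ⟨g, hg⟩ := IsCyclic.exists_generator (α := Fˣ)
  have ho : orderOf g = (q - 1) * (q + 1) := by
    rw [orderOf_eq_card_of_forall_mem_zpowers hg, Nat.card_eq_fintype_card, Fintype.card_units,
      hcard]
    obtain ⟨m, rfl⟩ : ∃ m, q = m + 1 := ⟨q - 1, by omega⟩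
    rw [Nat.add_sub_cancel]
    apply Nat.sub_eq_of_eq_add
    ring
  refine ⟨g, ?_, fun x hx => ?_⟩
  · rw [IsPrimitiveRoot.coe_units_iff, ← ho]
    exact IsPrimitiveRoot.orderOf g
  · obtain ⟨k, hk⟩ := mem_powers_iff_mem_zpowers.2 (hg (Units.mk0 x hx))
    refine ⟨k, ?_⟩
    have := congrArg (Units.val) hk
    simpa using this.symm

/-- The norm to the fixed field of the conjugation is surjective. -/
lemma norm_surj {q : ℕ} (hq : 1 < q) (hcard : Fintype.card F = q ^ 2) (y : F)
    (hy : y ^ q = y) : ∃ x, x * x ^ q = y := by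
  by_cases hy0 : y = 0
  · exact ⟨0, by simp [hy0]⟩
  obtain ⟨g, hg, hgen⟩ := exists_primitive hq hcard
  obtain ⟨k, rfl⟩ := hgen y hy0
  have h1 : (g ^ k) ^ (q - 1) = 1 := by
    have : (g ^ k) ^ (q - 1) * g ^ k = 1 * g ^ k := by
      rw [← pow_succ, Nat.sub_add_cancel hq.le, hy, one_mul]
    exact mul_right_cancel₀ hy0 this
  rw [← pow_mul, hg.pow_eq_one_iff_dvd, mul_comm k] at h1
  obtain ⟨m, rfl⟩ := Nat.dvd_of_mul_dvd_mul_left (by omega) h1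
  exact ⟨g ^ m, by ring⟩

/-- Modulo inversion, the group of elements of norm one has `1 + ⌈q/2⌉` classes; the class of `x`
is recorded by `x + x⁻¹`. -/
lemma ncard_trace {q : ℕ} (hq : 1 < q) (hcard : Fintype.card F = q ^ 2) :
    ((fun x : F => x + x⁻¹) '' {x | x * x ^ q = 1}).ncard = 1 + (q + 1) / 2 := by
  classical
  obtain ⟨g, hg, -⟩ := exists_primitive hq hcard
  have hz : IsPrimitiveRoot (g ^ (q - 1)) (q + 1) := by
    refine hg.pow (Nat.mul_pos (by omega) (by omega)) rfl
  set z := g ^ (q - 1)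
  have hz0 : z ≠ 0 := hz.ne_zero (by omega)
  have himg : ((fun x : F => x + x⁻¹) '' {x | x * x ^ q = 1})
      = ((Finset.range (1 + (q + 1) / 2)).image (fun k => z ^ k + (z ^ k)⁻¹) : Finset F) := by
    ext y
    simp only [Set.mem_image, Set.mem_ofPred_eq, Finset.coe_image, Finset.coe_range, Set.mem_Iio]
    constructor
    · rintro ⟨x, hx, rfl⟩
      rw [← pow_succ'] at hx
      obtain ⟨k, hk, rfl⟩ := hz.eq_pow_of_pow_eq_one hx
      by_cases hk2 : k < 1 + (q + 1) / 2
      · exact ⟨k, hk2, rfl⟩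
      · refine ⟨q + 1 - k, by omega, ?_⟩
        have : z ^ (q + 1 - k) = (z ^ k)⁻¹ := by
          apply eq_inv_of_mul_eq_one_left
          rw [← pow_add, Nat.sub_add_cancel hk.le, hz.pow_eq_one]
        rw [this, inv_inv, add_comm]
    · rintro ⟨k, hk, rfl⟩
      refine ⟨z ^ k, ?_, rfl⟩
      rw [← pow_succ', ← pow_mul, mul_comm, pow_mul, hz.pow_eq_one, one_pow]
  rw [himg, Set.ncard_coe_finset, Finset.card_image_of_injOn, Finset.card_range]
  intro k hk l hl hkl
  simp only [Finset.coe_range, Set.mem_Iio] at hk hl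
  have hzk : z ^ k ≠ 0 := pow_ne_zero _ hz0
  have hzl : z ^ l ≠ 0 := pow_ne_zero _ hz0
  simp only at hkl
  field_simp at hkl
  have : (z ^ k - z ^ l) * (z ^ (k + l) - 1) = 0 := by
    rw [pow_add]
    linear_combination hkl
  rcases mul_eq_zero.1 this with h | h
  · exact hz.pow_inj (by omega) (by omega) (sub_eq_zero.1 h)
  · have := (hz.pow_eq_one_iff_dvd _).1 (sub_eq_zero.1 h)
    rcases Nat.eq_zero_or_pos (k + l) with h0 | h0
    · omega
    · have := Nat.le_of_dvd h0 this
      omega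

end FiniteField

/-! ### Triangles in the projective plane -/

section Triangles

variable {F : Type*} [Field F]

lemma hermF_eq {q : ℕ} {σ : F →+* F} (hq : ∀ x, σ x = x ^ q) (v : Fin 3 → F) :
    hermF q v = hForm σ v v := by
  simp only [hermF, hForm, hq]; ring

lemma isSim_iff {q : ℕ} {σ : F →+* F} (hq : ∀ x, σ x = x ^ q) (M : Matrix (Fin 3) (Fin 3) F) :
    IsSim σ M ↔ IsUnit M ∧ ∃ c : F, c ≠ 0 ∧ ∀ x, hermF q (M.mulVec x) = c * hermF q x := by
  simp only [IsSim, hermF_eq hq]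

lemma eq_mk_iff {P : Projectivization F (Fin 3 → F)} {v : Fin 3 → F} (hv : v ≠ 0) :
    P = Projectivization.mk F v hv ↔ ∃ a : F, P.rep = a • v := by
  conv_lhs => rw [← P.mk_rep]
  rw [Projectivization.mk_eq_mk_iff']
  exact exists_congr fun a => eq_comm

lemma triple_rep_ne_zero {σ : F →+* F} (hσ : ∀ x, σ (σ x) = x)
    {P Q R : Projectivization F (Fin 3 → F)} (hPQ : P ≠ Q) (hQR : Q ≠ R) (hRP : R ≠ P)
    (hP : hForm σ P.rep P.rep = 0) (hQ : hForm σ Q.rep Q.rep = 0)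
    (hR : hForm σ R.rep R.rep = 0) : triple σ P.rep Q.rep R.rep ≠ 0 := by
  have key : ∀ A B : Projectivization F (Fin 3 → F), A ≠ B → hForm σ A.rep A.rep = 0 →
      hForm σ B.rep B.rep = 0 → hForm σ A.rep B.rep ≠ 0 := by
    intro A B hAB hA hB h
    apply hAB
    rw [← B.mk_rep, eq_mk_iff]
    exact prop_of_hForm_eq_zero hσ B.rep_nonzero hA hB h
  exact mul_ne_zero (mul_ne_zero (key _ _ hPQ hP hQ) (key _ _ hQR hQ hR)) (key _ _ hRP hR hP)

lemma collinear_iff [DecidableEq (Projectivization F (Fin 3 → F))]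
    {P Q R : Projectivization F (Fin 3 → F)} (hPQ : P ≠ Q) :
    hermCollinear F {P, Q, R} ↔ Matrix.det (Matrix.of ![P.rep, Q.rep, R.rep]) = 0 := by
  constructor
  · rintro ⟨W, hW, hT⟩
    by_contra hdet
    have hli : LinearIndependent F ![P.rep, Q.rep, R.rep] :=
      Matrix.linearIndependent_rows_of_det_ne_zero hdet
    have hmem : ∀ i, ![P.rep, Q.rep, R.rep] i ∈ W := by
      intro i
      fin_cases i
      · exact hT P (by simp)
      · exact hT Q (by simp)
      · exact hT R (by simp)
    have hle : Submodule.span F (Set.range ![P.rep, Q.rep, R.rep]) ≤ W := by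
      rw [Submodule.span_le]
      rintro _ ⟨i, rfl⟩
      exact hmem i
    have h1 := Submodule.finrank_mono hle
    rw [finrank_span_eq_card hli, hW] at h1
    simp at h1
  · intro hdet
    have hli : LinearIndependent F ![P.rep, Q.rep] := by
      rw [LinearIndependent.pair_iff' P.rep_nonzero]
      intro a ha
      apply hPQ
      symm
      rw [← P.mk_rep, eq_mk_iff]
      exact ⟨a, ha.symm⟩
    refine ⟨Submodule.span F (Set.range ![P.rep, Q.rep]), by
      rw [finrank_span_eq_card hli]; simp, ?_⟩
    have hP : P.rep ∈ Submodule.span F (Set.range ![P.rep, Q.rep]) :=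
      Submodule.subset_span ⟨0, rfl⟩
    have hQ : Q.rep ∈ Submodule.span F (Set.range ![P.rep, Q.rep]) :=
      Submodule.subset_span ⟨1, rfl⟩
    have hR : R.rep ∈ Submodule.span F (Set.range ![P.rep, Q.rep]) := by
      obtain ⟨c, hc, hc0⟩ := Matrix.exists_vecMul_eq_zero_iff.2 hdet
      have hsum : c 0 • P.rep + c 1 • Q.rep + c 2 • R.rep = 0 := by
        rw [← hc0]
        funext i
        simp [vecMul, dotProduct, Fin.sum_univ_three]
      by_cases h2 : c 2 = 0
      · rw [h2, zero_smul, add_zero] at hsum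
        obtain ⟨h0, h1⟩ := LinearIndependent.pair_iff.1 hli _ _ hsum
        exact absurd (funext fun i => by fin_cases i <;> simp [h0, h1, h2]) hc
      · have : R.rep = (-(c 2)⁻¹ * c 0) • P.rep + (-(c 2)⁻¹ * c 1) • Q.rep := by
          have h3 : R.rep = (c 2)⁻¹ • (c 2 • R.rep) := by
            rw [smul_smul, inv_mul_cancel₀ h2, one_smul]
          rw [h3, eq_neg_of_add_eq_zero_right hsum]
          module
        rw [this]
        exact Submodule.add_mem _ (Submodule.smul_mem _ _ hP) (Submodule.smul_mem _ _ hQ)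
    intro X hX
    simp only [Finset.mem_insert, Finset.mem_singleton] at hX
    rcases hX with rfl | rfl | rfl <;> assumption

/-- A similitude moves a triangle to the triangle of image points. -/
lemma hermRel_insert_iff [DecidableEq (Projectivization F (Fin 3 → F))] {q : ℕ} {σ : F →+* F}
    (hq : ∀ x, σ x = x ^ q) {P Q R : Projectivization F (Fin 3 → F)}
    {T' : Finset (Projectivization F (Fin 3 → F))} :
    hermRel q {P, Q, R} T' ↔ ∃ M, ∃ hM : IsSim σ M,
      T' = {Projectivization.mk F (M *ᵥ P.rep) (hM.mulVec_ne_zero P.rep_nonzero),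
        Projectivization.mk F (M *ᵥ Q.rep) (hM.mulVec_ne_zero Q.rep_nonzero),
        Projectivization.mk F (M *ᵥ R.rep) (hM.mulVec_ne_zero R.rep_nonzero)} := by
  constructor
  · rintro ⟨M, hu, hc, hT⟩
    have hM : IsSim σ M := (isSim_iff hq M).2 ⟨hu, hc⟩
    refine ⟨M, hM, ?_⟩
    ext X
    rw [hT]
    simp only [Finset.mem_insert, Finset.mem_singleton, eq_mk_iff, exists_eq_or_imp,
      exists_eq_left]
  · rintro ⟨M, hM, rfl⟩
    obtain ⟨hu, hc⟩ := (isSim_iff hq M).1 hM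
    refine ⟨M, hu, hc, fun X => ?_⟩
    simp only [Finset.mem_insert, Finset.mem_singleton, eq_mk_iff, exists_eq_or_imp,
      exists_eq_left]

/-- The trace `ω + ω⁻¹` of the angular invariant, a symmetric function of the three points. -/
noncomputable def trInv (σ : F →+* F) (P Q R : Projectivization F (Fin 3 → F)) : F :=
  omegaInv σ P.rep Q.rep R.rep + (omegaInv σ P.rep Q.rep R.rep)⁻¹

lemma trInv_cycle (σ : F →+* F) (P Q R : Projectivization F (Fin 3 → F)) :
    trInv σ Q R P = trInv σ P Q R := by
  rw [trInv, trInv, omegaInv_cycle]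

lemma trInv_swap {σ : F →+* F} (hσ : ∀ x, σ (σ x) = x)
    (P Q R : Projectivization F (Fin 3 → F)) : trInv σ Q P R = trInv σ P Q R := by
  rw [trInv, trInv, omegaInv_swap hσ, inv_inv, add_comm]

lemma trInv_congr [DecidableEq (Projectivization F (Fin 3 → F))] {σ : F →+* F}
    (hσ : ∀ x, σ (σ x) = x) {P Q R P' Q' R' : Projectivization F (Fin 3 → F)}
    (h1 : P' ≠ Q') (h2 : Q' ≠ R') (h3 : R' ≠ P')
    (h : ({P, Q, R} : Finset (Projectivization F (Fin 3 → F))) = {P', Q', R'}) :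
    trInv σ P' Q' R' = trInv σ P Q R := by
  have hP : P' ∈ ({P, Q, R} : Finset (Projectivization F (Fin 3 → F))) := by rw [h]; simp
  have hQ : Q' ∈ ({P, Q, R} : Finset (Projectivization F (Fin 3 → F))) := by rw [h]; simp
  have hR : R' ∈ ({P, Q, R} : Finset (Projectivization F (Fin 3 → F))) := by rw [h]; simp
  simp only [Finset.mem_insert, Finset.mem_singleton] at hP hQ hR
  have c := trInv_cycle σ
  have s := trInv_swap hσ
  rcases hP with rfl | rfl | rfl <;> rcases hQ with rfl | rfl | rfl <;>
    rcases hR with rfl | rfl | rfl <;> first | contradiction | grind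

/-- `ω + ω⁻¹` determines `ω` up to inversion. -/
lemma eq_or_eq_inv {x y : F} (hx : x ≠ 0) (hy : y ≠ 0) (h : x + x⁻¹ = y + y⁻¹) :
    x = y ∨ x = y⁻¹ := by
  have : (x - y) * (x * y - 1) = 0 := by
    field_simp at h
    linear_combination h
  rcases mul_eq_zero.1 this with h | h
  · exact Or.inl (sub_eq_zero.1 h)
  · exact Or.inr (eq_inv_of_mul_eq_one_left (sub_eq_zero.1 h))

lemma rep_mk_form {σ : F →+* F} {v : Fin 3 → F} (hv : v ≠ 0) (h : hForm σ v v = 0) :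
    hForm σ (Projectivization.mk F v hv).rep (Projectivization.mk F v hv).rep = 0 := by
  obtain ⟨a, ha⟩ := (eq_mk_iff hv).1 rfl
  rw [ha, hForm_smul, h, mul_zero]

lemma omegaInv_mk {σ : F →+* F} (hσ : ∀ x, σ (σ x) = x) {u v w : Fin 3 → F}
    (hu : u ≠ 0) (hv : v ≠ 0) (hw : w ≠ 0) :
    omegaInv σ (Projectivization.mk F u hu).rep (Projectivization.mk F v hv).rep
      (Projectivization.mk F w hw).rep = omegaInv σ u v w := by
  obtain ⟨a, ha⟩ := Projectivization.exists_smul_eq_mk_rep F u hu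
  obtain ⟨b, hb⟩ := Projectivization.exists_smul_eq_mk_rep F v hv
  obtain ⟨c, hc⟩ := Projectivization.exists_smul_eq_mk_rep F w hw
  rw [← ha, ← hb, ← hc]
  exact omegaInv_smul hσ a.ne_zero b.ne_zero c.ne_zero u v w

lemma exists_triangle [DecidableEq (Projectivization F (Fin 3 → F))] {q : ℕ} {σ : F →+* F}
    (hq : ∀ x, σ x = x ^ q) (hσ : ∀ x, σ (σ x) = x) (hne : ∃ a, σ a ≠ a)
    (hN : ∀ y, σ y = y → ∃ x, x * σ x = y) {x : F} (hx : x * σ x = 1) :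
    ∃ P Q R : Projectivization F (Fin 3 → F), P ≠ Q ∧ Q ≠ R ∧ R ≠ P ∧
      {P, Q, R} ∈ hermTri q F ∧ omegaInv σ P.rep Q.rep R.rep = x := by
  obtain ⟨s, hs, hsx⟩ := hilbert90 hσ hne x hx
  obtain ⟨t, ht⟩ := hN (s + σ s) (by rw [map_add, hσ, add_comm])
  have h1 : (![0, 1, 0] : Fin 3 → F) ≠ 0 := fun h => by simpa using congrFun h 1
  have h2 : (![0, 0, 1] : Fin 3 → F) ≠ 0 := fun h => by simpa using congrFun h 2
  have h3 : (![t, 1, s] : Fin 3 → F) ≠ 0 := fun h => by simpa using congrFun h 1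
  have f1 : hForm σ ![0, 1, 0] ![0, 1, 0] = 0 := by simp [hForm]
  have f2 : hForm σ ![0, 0, 1] ![0, 0, 1] = 0 := by simp [hForm]
  have f3 : hForm σ ![t, 1, s] ![t, 1, s] = 0 := by simp [hForm, ht]
  have n12 : Projectivization.mk F _ h1 ≠ Projectivization.mk F _ h2 := by
    rw [Ne, Projectivization.mk_eq_mk_iff']
    rintro ⟨a, ha⟩
    simpa using congrFun ha 1
  have n23 : Projectivization.mk F _ h2 ≠ Projectivization.mk F _ h3 := by
    rw [Ne, Projectivization.mk_eq_mk_iff']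
    rintro ⟨a, ha⟩
    have e1 := congrFun ha 1
    have e2 := congrFun ha 2
    simp at e1 e2
    simp [e1] at e2
  have n31 : Projectivization.mk F _ h3 ≠ Projectivization.mk F _ h1 := by
    rw [Ne, Projectivization.mk_eq_mk_iff']
    rintro ⟨a, ha⟩
    exact hs (by simpa using (congrFun ha 2).symm)
  refine ⟨_, _, _, n12, n23, n31, ⟨Finset.card_eq_three.2 ⟨_, _, _, n12, n31.symm, n23, rfl⟩, ?_⟩,
    ?_⟩
  · intro X hX
    rw [hermF_eq hq]
    simp only [Finset.mem_insert, Finset.mem_singleton] at hX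
    rcases hX with rfl | rfl | rfl
    · exact rep_mk_form h1 f1
    · exact rep_mk_form h2 f2
    · exact rep_mk_form h3 f3
  · rw [omegaInv_mk hσ, omegaInv, triple_normal, map_neg, neg_div_neg_eq, hsx]

/-- Two triangles are equivalent exactly when their symmetrized invariants agree. -/
lemma hermRel_iff [DecidableEq (Projectivization F (Fin 3 → F))] {q : ℕ} {σ : F →+* F}
    (hq : ∀ x, σ x = x ^ q) (hσ : ∀ x, σ (σ x) = x) (hne : ∃ a, σ a ≠ a)
    (hN : ∀ y, σ y = y → ∃ x, x * σ x = y) {P Q R P' Q' R' : Projectivization F (Fin 3 → F)}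
    (hPQ : P ≠ Q) (hQR : Q ≠ R) (hRP : R ≠ P)
    (hP : hForm σ P.rep P.rep = 0) (hQ : hForm σ Q.rep Q.rep = 0)
    (hR : hForm σ R.rep R.rep = 0)
    (hPQ' : P' ≠ Q') (hQR' : Q' ≠ R') (hRP' : R' ≠ P')
    (hP' : hForm σ P'.rep P'.rep = 0) (hQ' : hForm σ Q'.rep Q'.rep = 0)
    (hR' : hForm σ R'.rep R'.rep = 0) :
    hermRel q {P, Q, R} {P', Q', R'} ↔ trInv σ P Q R = trInv σ P' Q' R' := by
  have hτ := triple_rep_ne_zero hσ hPQ hQR hRP hP hQ hR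
  have hτ' := triple_rep_ne_zero hσ hPQ' hQR' hRP' hP' hQ' hR'
  rw [hermRel_insert_iff hq]
  constructor
  · rintro ⟨M, hM, hT⟩
    rw [trInv_congr hσ hPQ' hQR' hRP' hT.symm, trInv, trInv, omegaInv_mk hσ,
      omegaInv_sim hσ hne hM]
  · intro h
    have hω := left_ne_zero_of_mul_eq_one (omegaInv_norm hσ hτ)
    have hω' := left_ne_zero_of_mul_eq_one (omegaInv_norm hσ hτ')
    rcases eq_or_eq_inv hω hω' h with h | h
    · obtain ⟨M, hM, h1, h2, h3⟩ := exists_sim hσ hne hN hP hQ hR hτ hP' hQ' hR' hτ' h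
      refine ⟨M, hM, ?_⟩
      rw [← (eq_mk_iff _).2 h1, ← (eq_mk_iff _).2 h2, ← (eq_mk_iff _).2 h3]
    · rw [← omegaInv_swap hσ] at h
      obtain ⟨M, hM, h1, h2, h3⟩ := exists_sim hσ hne hN hP hQ hR hτ hQ' hP' hR'
        (triple_rep_ne_zero hσ hPQ'.symm hRP'.symm hQR'.symm hQ' hP' hR') h
      refine ⟨M, hM, ?_⟩
      rw [← (eq_mk_iff _).2 h1, ← (eq_mk_iff _).2 h2, ← (eq_mk_iff _).2 h3]
      exact Finset.insert_comm _ _ _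

/-- The classes of an equivalence relation given as the fibres of a function are counted by the
values of the function. -/
lemma ncard_classes {α β : Type*} (A : Set α) (R : α → α → Prop) (f : α → β)
    (h : ∀ a ∈ A, ∀ b ∈ A, R a b ↔ f a = f b) :
    {O : Set α | ∃ a ∈ A, O = {b ∈ A | R a b}}.ncard = (f '' A).ncard := by
  have : {O : Set α | ∃ a ∈ A, O = {b ∈ A | R a b}}
      = (fun y => {b ∈ A | y = f b}) '' (f '' A) := by
    ext O
    constructor
    · rintro ⟨a, ha, rfl⟩
      refine ⟨f a, ⟨a, ha, rfl⟩, ?_⟩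
      ext b
      exact and_congr_right fun hb => (h a ha b hb).symm
    · rintro ⟨_, ⟨a, ha, rfl⟩, rfl⟩
      refine ⟨a, ha, ?_⟩
      ext b
      exact and_congr_right fun hb => (h a ha b hb).symm
  rw [this, Set.InjOn.ncard_image]
  rintro _ ⟨a, ha, rfl⟩ y - hxy
  have : a ∈ {b ∈ A | f a = f b} := ⟨ha, rfl⟩
  simp only at hxy
  rw [hxy] at this
  exact this.2.symm

end Triangles

/-- The group of automorphisms of the Hermitian curve has exactly 1 + ⌈q/2⌉
orbits on Hermitian triangles, and the collinear triangles form one orbit. -/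
theorem hermitian_triangle_orbits (q : ℕ) (hq : IsPrimePow q) (F : Type*) [Field F] [Fintype F]
    (hcard : Fintype.card F = q ^ 2) :
    ({O : Set (Finset (Projectivization F (Fin 3 → F))) |
        ∃ T ∈ hermTri q F, O = {T' ∈ hermTri q F | hermRel q T T'}}.ncard
      = 1 + (q + 1) / 2) ∧
    (∃ T ∈ hermTri q F,
      {T' ∈ hermTri q F | hermRel q T T'} = {T' ∈ hermTri q F | hermCollinear F T'}) := by
  classical
  have hq1 : 1 < q := hq.one_lt
  obtain ⟨σ, hσq⟩ := exists_conj (F := F) hq hcard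
  have hσ : ∀ x, σ (σ x) = x := fun x => by
    rw [hσq, hσq, ← pow_mul, ← sq, ← hcard, FiniteField.pow_card]
  have hne : ∃ a, σ a ≠ a := by
    obtain ⟨g, hg, -⟩ := exists_primitive (F := F) hq1 hcard
    refine ⟨g, fun h => ?_⟩
    rw [hσq] at h
    have h1 : g ^ (q - 1) = 1 := by
      have hg0 : g ≠ 0 := hg.ne_zero (Nat.mul_pos (by omega) (by omega)).ne'
      apply mul_right_cancel₀ hg0
      rw [← pow_succ, Nat.sub_add_cancel hq1.le, h, one_mul]
    have h2 := Nat.le_of_dvd (by omega) ((hg.pow_eq_one_iff_dvd _).1 h1)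
    have h3 : (q - 1) * 1 < (q - 1) * (q + 1) := Nat.mul_lt_mul_of_pos_left (by omega) (by omega)
    omega
  have hN : ∀ y, σ y = y → ∃ x, x * σ x = y := by
    simp only [hσq]
    exact fun y => norm_surj hq1 hcard y
  have hsplit : ∀ T ∈ hermTri q F, ∃ P Q R : Projectivization F (Fin 3 → F),
      P ≠ Q ∧ Q ≠ R ∧ R ≠ P ∧ T = {P, Q, R} ∧ hForm σ P.rep P.rep = 0 ∧
      hForm σ Q.rep Q.rep = 0 ∧ hForm σ R.rep R.rep = 0 := by
    rintro T ⟨hcard3, hT⟩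
    obtain ⟨P, Q, R, h1, h2, h3, rfl⟩ := Finset.card_eq_three.1 hcard3
    simp only [hermF_eq hσq] at hT
    exact ⟨P, Q, R, h1, h3, h2.symm, rfl, hT P (by simp), hT Q (by simp), hT R (by simp)⟩
  have hf : ∀ T : Finset (Projectivization F (Fin 3 → F)), ∃ y : F, ∀ P Q R, P ≠ Q → Q ≠ R →
      R ≠ P → T = {P, Q, R} → y = trInv σ P Q R := by
    intro T
    by_cases h : ∃ P Q R, P ≠ Q ∧ Q ≠ R ∧ R ≠ P ∧ T = {P, Q, R}
    · obtain ⟨P, Q, R, h1, h2, h3, rfl⟩ := h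
      exact ⟨trInv σ P Q R, fun P' Q' R' h1' h2' h3' h' => (trInv_congr hσ h1' h2' h3' h').symm⟩
    · exact ⟨0, fun P Q R h1 h2 h3 h' => absurd ⟨P, Q, R, h1, h2, h3, h'⟩ h⟩
  choose f hf using hf
  have hrel : ∀ T ∈ hermTri q F, ∀ T' ∈ hermTri q F, hermRel q T T' ↔ f T = f T' := by
    intro T hT T' hT'
    obtain ⟨P, Q, R, h1, h2, h3, hTe, hP, hQ, hR⟩ := hsplit T hT
    obtain ⟨P', Q', R', h1', h2', h3', hTe', hP', hQ', hR'⟩ := hsplit T' hT'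
    rw [hf T P Q R h1 h2 h3 hTe, hf T' P' Q' R' h1' h2' h3' hTe', hTe, hTe']
    exact hermRel_iff hσq hσ hne hN h1 h2 h3 hP hQ hR h1' h2' h3' hP' hQ' hR'
  constructor
  · rw [ncard_classes _ _ f hrel, ← ncard_trace (F := F) hq1 hcard]
    congr 1
    ext y
    constructor
    · rintro ⟨T, hT, rfl⟩
      obtain ⟨P, Q, R, h1, h2, h3, hTe, hP, hQ, hR⟩ := hsplit T hT
      refine ⟨omegaInv σ P.rep Q.rep R.rep, ?_, (hf T P Q R h1 h2 h3 hTe).symm⟩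
      have := omegaInv_norm hσ (triple_rep_ne_zero hσ h1 h2 h3 hP hQ hR)
      rwa [hσq] at this
    · rintro ⟨x, hx, rfl⟩
      obtain ⟨P, Q, R, h1, h2, h3, hT, hω⟩ := exists_triangle hσq hσ hne hN (x := x)
        (by rw [hσq]; exact hx)
      exact ⟨_, hT, by rw [hf _ P Q R h1 h2 h3 rfl, trInv, hω]⟩
  · obtain ⟨P, Q, R, h1, h2, h3, hT, hω⟩ := exists_triangle hσq hσ hne hN (x := -1)
      (by rw [map_neg, map_one]; ring)
    refine ⟨_, hT, ?_⟩
    ext T'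
    refine and_congr_right fun hT' => ?_
    obtain ⟨P', Q', R', h1', h2', h3', hTe', hP', hQ', hR'⟩ := hsplit T' hT'
    have hτ' := triple_rep_ne_zero hσ h1' h2' h3' hP' hQ' hR'
    have hω0 := left_ne_zero_of_mul_eq_one (omegaInv_norm hσ hτ')
    rw [hrel _ hT _ hT', hf _ P Q R h1 h2 h3 rfl, hf T' P' Q' R' h1' h2' h3' hTe', hTe',
      collinear_iff h1', ← omegaInv_eq_neg_one_iff hσ hP' hQ' hR' hτ', trInv, hω, trInv]
    constructor
    · intro h
      -- `-1` is its own inverse, so inversion creates no second orbit here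
      rcases eq_or_eq_inv (by simp) hω0 h with h | h
      · exact h.symm
      · rw [← inv_inv (omegaInv σ P'.rep Q'.rep R'.rep), ← h, inv_neg, inv_one]
    · intro h
      rw [h]
end

section
/- Let q ≥ 2 be an integer. Then 24 · Σ_{i=0}^{q} Σ_{j=0}^{q} Σ_{k=0}^{q} max{ C(s_1(i,j,k)+3, 3), C(s_1(j,k,i)+3, 3), C(s_1(k,i,j)+3, 3) } = 2q⁶ − 6q⁵ + 9q⁴ + 12q³ − 35q² + 18q. (In the paper, this sum is the cardinality N(T_1) of the Weierstrass gap set G(P,Q,R) of a collinear Hermitian triangle {P,Q,R} on the Hermitian curve over 𝔽_{q²}.) -/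
/-!
For `d = 1` the correction `ε` vanishes, and `σ₁(i,j) - k - 1` is, for `j ≥ 1`, equal to
`(q+1)(q - 2 - j + [i < j]) + (j - k - 1)`, so that
`s₁(i,j,k) + 3 = q - j + [i < j] + [k < j]`, whereas `j = 0` gives `s₁ = -1` and a vanishing
binomial coefficient (`ch3_sFn`). It is convenient to use the reflected coordinates `x = q - i`,
`y = q - j`, `z = q - k`: then `s₁ + 3 = y + [y < x] + [y < z]`, which no longer depends on `q`
except for the exceptional value at `y = q`. Since `n ↦ C(n,3)` is monotone, the summand is
`C(M, 3)` with `M` the maximum of the three tops (`topMax`).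

The cube `{0,…,q}³` is filled by shells `{max = n}` (`sum_cube_succ`). On a shell with `n < q`
the value of `M` is `n`, except at the permutations of `(n, n, n-1)`, where it is `n + 1`. On the
last shell, `max = q`, the value is `max y z + 1` at `(q, y, z)`, `z + 2` at `(q, q, z)`
and `0` at `(q, q, q)`. Each of the resulting sums is evaluated by induction.
-/

/-- ε_d(i,j): the correction term in the discrepancy function of a Hermitian
triangle of type `d`. -/
def epsFn (q d i j : ℤ) : ℤ :=
  if ¬ d ∣ i ∧ j = i then 1
  else if ¬ d ∣ i ∧ (j = i + 1 ∨ (i = q ∧ j = 0)) then -1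
  else 0

/-- σ_d(i,j): the two-point discrepancy function of a Hermitian triangle of
type `d`, for 0 ≤ i,j ≤ q. -/
def sigmaFn (q d i j : ℤ) : ℤ :=
  if j = 0 then epsFn q d i j
  else (q - 2) * (q + 1) - j * q + (if i < j then q + 1 else 0) + epsFn q d i j

/-- s_d(i,j,k) = ⌊(σ_d(i,j) − k − 1)/(q+1)⌋. -/
def sFn (q d i j k : ℤ) : ℤ := Int.fdiv (sigmaFn q d i j - k - 1) (q + 1)

/-- C(s+3, 3) as an integer (equal to 0 when s+3 < 3). -/
def ch3 (s : ℤ) : ℤ := ((s + 3).toNat.choose 3 : ℤ)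

/-- The top `s₁ + 3` of the binomial coefficient of `s₁(i,j,k)`, where `x = q - j` and `y`, `z`
are the reflections of `i`, `k` (which enter symmetrically). At `x = q`, that is `j = 0`, the true
top is `2`; it is replaced by `0`, which gives the same `C(-, 3) = 0`. -/
def chTop (q x y z : ℕ) : ℕ :=
  if x = q then 0 else x + (if x < y then 1 else 0) + (if x < z then 1 else 0)

/-- The largest of the three tops at the point with reflected coordinates `(x, y, z)`. -/
def topMax (q x y z : ℕ) : ℕ := max (max (chTop q y x z) (chTop q z y x)) (chTop q x z y)

lemma ch3_sFn (q x y z : ℕ) (hx : x ≤ q) (hy : y ≤ q) (hz : z ≤ q) :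
    ch3 (sFn q 1 (q - x) (q - y) (q - z)) = ((chTop q y x z).choose 3 : ℤ) := by
  have hq : (0 : ℤ) < (q : ℤ) + 1 := by omega
  have fdiv_eq : ∀ a s r : ℤ, a = (q + 1) * s + r → 0 ≤ r → r < q + 1 →
      Int.fdiv a (q + 1) = s := by
    intro a s r ha h0 h1
    rw [Int.fdiv_eq_ediv_of_nonneg _ hq.le, ha, Int.mul_add_ediv_left _ _ hq.ne',
      Int.ediv_eq_zero_of_lt h0 h1, add_zero]
  have heps : epsFn q 1 (q - x) (q - y) = 0 := by simp [epsFn]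
  unfold sFn sigmaFn
  rw [heps]
  by_cases hyq : y = q
  · subst hyq
    rw [if_pos (by ring), fdiv_eq _ (-1) z (by ring) (by omega) (by omega)]
    simp [ch3, chTop]
  · rw [if_neg (by omega)]
    have hs : Int.fdiv (((q : ℤ) - 2) * (q + 1) - (q - y) * q
        + (if (q : ℤ) - x < q - y then (q : ℤ) + 1 else 0) + 0 - (q - z) - 1) (q + 1)
        = (chTop q y x z : ℤ) - 3 := by
      -- the remainder is `j - k - 1 = z - y - 1`, increased by `q + 1` when it is negative
      apply fdiv_eq _ _ (if y < z then (z : ℤ) - y - 1 else z - y + q)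
      · simp only [chTop, if_neg hyq]
        by_cases h1 : y < x <;> by_cases h2 : y < z <;> simp [h1, h2] <;> ring
      · split_ifs <;> omega
      · split_ifs <;> omega
    rw [hs, ch3]
    simp

lemma max_choose_three (a b c : ℕ) :
    max (max (a.choose 3 : ℤ) (b.choose 3)) (c.choose 3) = ((max (max a b) c).choose 3 : ℤ) := by
  have h : Monotone fun n : ℕ => (n.choose 3 : ℤ) := fun a b hab => by
    exact Int.ofNat_le.mpr (Nat.choose_le_choose 3 hab)
  rw [h.map_max, h.map_max]

lemma sum_Icc_reflect (q : ℕ) (f : ℤ → ℤ) :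
    ∑ i ∈ Finset.Icc (0 : ℤ) q, f i = ∑ x ∈ Finset.range (q + 1), f (q - x) := by
  refine Finset.sum_nbij' (fun i => (q - i).toNat) (fun x => (q : ℤ) - x) ?_ ?_ ?_ ?_ ?_
  · intro i hi; simp only [Finset.mem_Icc] at hi; simp only [Finset.mem_range]; omega
  · intro x hx; simp only [Finset.mem_range] at hx; simp only [Finset.mem_Icc]; omega
  · intro i hi; simp only [Finset.mem_Icc] at hi; omega
  · intro x hx; simp only [Finset.mem_range] at hx; omega
  · intro i hi; simp only [Finset.mem_Icc] at hi; congr 1; omega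

/-- A cube of side `n + 1` is the cube of side `n` together with the shell `max = n`. -/
lemma sum_cube_succ (n : ℕ) (f : ℕ → ℕ → ℕ → ℤ) :
    ∑ x ∈ Finset.range (n + 1), ∑ y ∈ Finset.range (n + 1), ∑ z ∈ Finset.range (n + 1), f x y z
      = ∑ x ∈ Finset.range n, ∑ y ∈ Finset.range n, ∑ z ∈ Finset.range n, f x y z
        + ∑ x ∈ Finset.range n, ∑ y ∈ Finset.range n, (f n x y + f x n y + f x y n)
        + ∑ x ∈ Finset.range n, (f n n x + f n x n + f x n n) + f n n n := by
  simp only [Finset.sum_range_succ, Finset.sum_add_distrib]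
  ring

lemma six_mul_choose_three (n : ℕ) : 6 * (n.choose 3 : ℤ) = n * (n - 1) * (n - 2) := by
  induction n with
  | zero => simp
  | succ n ih =>
    have h2 : 2 * (n.choose 2 : ℤ) = n * (n - 1) := by
      clear ih
      induction n with
      | zero => simp
      | succ n ih =>
        rw [Nat.choose_succ_succ' n 1, Nat.choose_one_right]
        push_cast
        linear_combination ih
    rw [Nat.choose_succ_succ' n 2]
    push_cast
    linear_combination ih + 3 * h2

/-- The contribution of the points with no reflected coordinate equal to `q`, filled up to
side `n`. -/
lemma sum_interior_cube (q n : ℕ) (hn : n ≤ q) :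
    120 * ∑ x ∈ Finset.range n, ∑ y ∈ Finset.range n, ∑ z ∈ Finset.range n,
        ((topMax q x y z).choose 3 : ℤ)
      = 10 * n ^ 6 - 54 * n ^ 5 + 75 * n ^ 4 + 60 * n ^ 3 - 205 * n ^ 2 + 114 * n := by
  induction n with
  | zero => simp
  | succ n ih =>
    have face : ∀ x ∈ Finset.range n, ∀ y ∈ Finset.range n,
        ((topMax q n x y).choose 3 : ℤ) + (topMax q x n y).choose 3 + (topMax q x y n).choose 3
          = 3 * n.choose 3 := by
      intro x hx y hy
      simp only [Finset.mem_range] at hx hy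
      have h1 : topMax q n x y = n := by unfold topMax chTop; grind
      have h2 : topMax q x n y = n := by unfold topMax chTop; grind
      have h3 : topMax q x y n = n := by unfold topMax chTop; grind
      rw [h1, h2, h3]; ring
    have edge : ∀ x ∈ Finset.range n,
        ((topMax q n n x).choose 3 : ℤ) + (topMax q n x n).choose 3 + (topMax q x n n).choose 3
          = 3 * n.choose 3
            + if x = n - 1 then 3 * (((n + 1).choose 3 : ℤ) - n.choose 3) else 0 := by
      intro x hx
      simp only [Finset.mem_range] at hx
      have h1 : topMax q n n x = if x = n - 1 then n + 1 else n := by unfold topMax chTop; grind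
      have h2 : topMax q n x n = if x = n - 1 then n + 1 else n := by unfold topMax chTop; grind
      have h3 : topMax q x n n = if x = n - 1 then n + 1 else n := by unfold topMax chTop; grind
      rw [h1, h2, h3]
      split_ifs <;> ring
    have corner : topMax q n n n = n := by unfold topMax chTop; grind
    rw [sum_cube_succ, Finset.sum_congr rfl fun x hx => Finset.sum_congr rfl (face x hx),
      Finset.sum_congr rfl edge, corner, Finset.sum_add_distrib, Finset.sum_ite_eq']
    have hc := six_mul_choose_three n
    have hc' := six_mul_choose_three (n + 1)
    have ih := ih (by omega)
    -- at `n = 0` the index `n - 1` is not in the empty range; both sides are then `0`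
    have hif : (if n - 1 ∈ Finset.range n then 3 * (((n + 1).choose 3 : ℤ) - n.choose 3) else 0)
        = 3 * (((n + 1).choose 3 : ℤ) - n.choose 3) := by
      rcases Nat.eq_zero_or_pos n with rfl | h
      · simp [Nat.choose]
      · rw [if_pos (Finset.mem_range.mpr (by omega))]
    rw [hif]
    simp only [Finset.sum_const, Finset.card_range, nsmul_eq_mul]
    push_cast at hc' ⊢
    linear_combination ih + (60 * n ^ 2 + 60 * n + 20 - 60) * hc + 60 * hc'

lemma sum_face (n : ℕ) :
    120 * ∑ x ∈ Finset.range n, ∑ y ∈ Finset.range n, ((max x y + 1).choose 3 : ℤ)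
      = 8 * n ^ 5 - 15 * n ^ 4 - 10 * n ^ 3 + 15 * n ^ 2 + 2 * n := by
  induction n with
  | zero => simp
  | succ n ih =>
    have h1 : ∀ x ∈ Finset.range n, ((max x n + 1).choose 3 : ℤ) = (n + 1).choose 3 := by
      intro x hx
      rw [max_eq_right (Finset.mem_range.mp hx).le]
    have h2 : ∀ x ∈ Finset.range n, ((max n x + 1).choose 3 : ℤ) = (n + 1).choose 3 := by
      intro x hx
      rw [max_eq_left (Finset.mem_range.mp hx).le]
    simp only [Finset.sum_range_succ, Finset.sum_add_distrib]
    rw [Finset.sum_congr rfl h1, Finset.sum_congr rfl h2, max_self]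
    have hc := six_mul_choose_three (n + 1)
    simp only [Finset.sum_const, Finset.card_range, nsmul_eq_mul]
    push_cast at hc ⊢
    linear_combination ih + 20 * (2 * n + 1) * hc

lemma sum_edge (n : ℕ) :
    24 * ∑ x ∈ Finset.range n, ((x + 2).choose 3 : ℤ) = (n + 2) * (n + 1) * n * (n - 1) := by
  induction n with
  | zero => simp
  | succ n ih =>
    rw [Finset.sum_range_succ]
    have hc := six_mul_choose_three (n + 2)
    push_cast at hc ⊢
    linear_combination ih + 4 * hc

/-- The full cube of side `q + 1`, whose last shell consists of the points with some original
coordinate equal to `0`. -/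
lemma sum_topMax (q : ℕ) :
    24 * ∑ x ∈ Finset.range (q + 1), ∑ y ∈ Finset.range (q + 1), ∑ z ∈ Finset.range (q + 1),
        ((topMax q x y z).choose 3 : ℤ)
      = 2 * q ^ 6 - 6 * q ^ 5 + 9 * q ^ 4 + 12 * q ^ 3 - 35 * q ^ 2 + 18 * q := by
  have face : ∀ x ∈ Finset.range q, ∀ y ∈ Finset.range q,
      ((topMax q q x y).choose 3 : ℤ) + (topMax q x q y).choose 3 + (topMax q x y q).choose 3
        = 3 * (max x y + 1).choose 3 := by
    intro x hx y hy
    simp only [Finset.mem_range] at hx hy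
    have h1 : topMax q q x y = max x y + 1 := by unfold topMax chTop; grind
    have h2 : topMax q x q y = max x y + 1 := by unfold topMax chTop; grind
    have h3 : topMax q x y q = max x y + 1 := by unfold topMax chTop; grind
    rw [h1, h2, h3]; ring
  have edge : ∀ x ∈ Finset.range q,
      ((topMax q q q x).choose 3 : ℤ) + (topMax q q x q).choose 3 + (topMax q x q q).choose 3
        = 3 * (x + 2).choose 3 := by
    intro x hx
    simp only [Finset.mem_range] at hx
    have h1 : topMax q q q x = x + 2 := by unfold topMax chTop; grind
    have h2 : topMax q q x q = x + 2 := by unfold topMax chTop; grind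
    have h3 : topMax q x q q = x + 2 := by unfold topMax chTop; grind
    rw [h1, h2, h3]; ring
  have corner : topMax q q q q = 0 := by simp [topMax, chTop]
  rw [sum_cube_succ, Finset.sum_congr rfl fun x hx => Finset.sum_congr rfl (face x hx),
    Finset.sum_congr rfl edge, corner]
  simp only [← Finset.mul_sum]
  have hA := sum_interior_cube q q le_rfl
  have hB := sum_face q
  have hD := sum_edge q
  have hz : ((Nat.choose 0 3 : ℕ) : ℤ) = 0 := by simp
  rw [hz]
  have h5 : ∀ a b : ℤ, 5 * a = 5 * b → a = b := fun a b h => by omega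
  apply h5
  linear_combination hA + 3 * hB + 15 * hD

/-- The number of Weierstrass gaps of a collinear Hermitian triangle:
24·N(T₁) = 2q⁶ − 6q⁵ + 9q⁴ + 12q³ − 35q² + 18q. -/
theorem gap_count_collinear (q : ℤ) (hq : 2 ≤ q) :
    24 * ∑ i ∈ Finset.Icc (0 : ℤ) q, ∑ j ∈ Finset.Icc (0 : ℤ) q, ∑ k ∈ Finset.Icc (0 : ℤ) q,
        max (max (ch3 (sFn q 1 i j k)) (ch3 (sFn q 1 j k i))) (ch3 (sFn q 1 k i j))
      = 2 * q ^ 6 - 6 * q ^ 5 + 9 * q ^ 4 + 12 * q ^ 3 - 35 * q ^ 2 + 18 * q := by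
  lift q to ℕ using by omega
  rw [← sum_topMax]
  simp only [sum_Icc_reflect]
  congr 1
  refine Finset.sum_congr rfl fun x hx => Finset.sum_congr rfl fun y hy =>
    Finset.sum_congr rfl fun z hz => ?_
  have hx := Nat.lt_succ_iff.mp (Finset.mem_range.mp hx)
  have hy := Nat.lt_succ_iff.mp (Finset.mem_range.mp hy)
  have hz := Nat.lt_succ_iff.mp (Finset.mem_range.mp hz)
  rw [ch3_sFn q x y z hx hy hz, ch3_sFn q y z x hy hz hx, ch3_sFn q z x y hz hx hy,
    max_choose_three, topMax]
end

section
/- Let q ≥ 2 be an integer and d a positive divisor of q+1. Then 24·d · Σ_{i=0}^{q} Σ_{j=0}^{q} Σ_{k=0}^{q} max{ C(s_d(i,j,k)+3, 3), C(s_d(j,k,i)+3, 3), C(s_d(k,i,j)+3, 3) } = d·(2q⁶ − 6q⁵ + 9q⁴ + 12q³ − 35q² + 18q) − 4(d−1)(q+1)(2q² − 5q + 5 − d). (In the paper, the sum is the cardinality N(T_d) of the Weierstrass gap set of a Hermitian triangle of type d, so N(T_d) = N(T_1) − (d−1)(q+1)(2q²−5q+5−d)/(6d).) -/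
/-! ### The summand at a single triple -/

/-- The summand of the gap count: the largest of the three binomials attached to `(i, j, k)`. -/
def G (q d i j k : ℤ) : ℤ :=
  max (max (ch3 (sFn q d i j k)) (ch3 (sFn q d j k i))) (ch3 (sFn q d k i j))

theorem ch3_mono : Monotone ch3 := by
  intro a b h
  unfold ch3
  exact_mod_cast Nat.choose_le_choose 3 (by omega)

theorem ch3_neg {s : ℤ} (h : s < 0) : ch3 s = 0 := by
  unfold ch3
  exact_mod_cast Nat.choose_eq_zero_of_lt (by omega)

theorem ch3_nonneg (s : ℤ) : 0 ≤ ch3 s := by unfold ch3; positivity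

theorem eps_bounds (q d i j : ℤ) : -1 ≤ epsFn q d i j ∧ epsFn q d i j ≤ 1 := by
  unfold epsFn; split_ifs <;> simp

/-- Since `s_d(i, j, k)` is the floor of
`q - 2 - j + [i < j] + (j + ε - k - 1) / (q + 1)`, and `-(q + 1) ≤ j + ε - k - 1 ≤ q`, the last
quotient contributes `0` or `-1`. -/
theorem sFn_pos {q d i j k : ℤ} (hj : 1 ≤ j) (hjq : j ≤ q) (hk : 0 ≤ k) (hkq : k ≤ q) :
    sFn q d i j k = q - 2 - j + (if i < j then 1 else 0)
      - (if j + epsFn q d i j ≤ k then 1 else 0) := by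
  have he := eps_bounds q d i j
  unfold sFn sigmaFn
  rw [if_neg (by omega), Int.fdiv_eq_ediv_of_nonneg _ (by omega)]
  generalize epsFn q d i j = e at *
  have key : ∀ t r : ℤ, 0 ≤ r → r < q + 1 → (t * (q + 1) + r) / (q + 1) = t := by
    intro t r h0 h1
    rw [Int.add_comm, Int.add_mul_ediv_right _ _ (by omega), Int.ediv_eq_zero_of_lt h0 h1, zero_add]
  by_cases hc : j + e ≤ k
  · rw [if_pos hc, ← key (q - 2 - j + (if i < j then 1 else 0) - 1) (q + 1 + j + e - k - 1)
      (by omega) (by omega)]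
    congr 1
    split_ifs <;> ring
  · rw [if_neg hc, ← key (q - 2 - j + (if i < j then 1 else 0) - 0) (j + e - k - 1)
      (by omega) (by omega)]
    congr 1
    split_ifs <;> ring

/-- A zero second index contributes nothing: `σ_d(i, 0) = ε_d(i, 0) ≤ 0`, as `d ∣ 0`. -/
theorem ch3_sFn_zero {q d i k : ℤ} (hq : 2 ≤ q) (hk : 0 ≤ k) :
    ch3 (sFn q d i 0 k) = 0 := by
  apply ch3_neg
  have he : epsFn q d i 0 ≤ 0 := by
    unfold epsFn
    split_ifs with h <;> try norm_num
    obtain ⟨h, rfl⟩ := h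
    simp at h
  unfold sFn sigmaFn
  rw [if_pos rfl, Int.fdiv_eq_ediv_of_nonneg _ (by omega)]
  exact Int.ediv_neg_of_neg_of_pos (by omega) (by omega)

theorem G_rot (q d i j k : ℤ) : G q d i j k = G q d j k i := by
  unfold G
  rw [max_assoc, max_comm]

theorem G_zero {q d a b : ℤ} (hq : 2 ≤ q) (ha : 1 ≤ a) (haq : a ≤ q) (hb : 1 ≤ b) (hbq : b ≤ q) :
    G q d 0 a b = ch3 (q - 2 - min a b) := by
  unfold G
  rw [ch3_sFn_zero hq (by omega), max_eq_left (le_trans (ch3_nonneg _) (le_max_left _ _)),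
    ← ch3_mono.map_max]
  congr 1
  rw [sFn_pos ha haq (by omega) hbq, sFn_pos hb hbq (by omega) (by omega)]
  have h1 := eps_bounds q d a b
  have h0 : epsFn q d 0 a = 0 := by simp [epsFn]
  have h2 : a ≠ b → a + 1 ≠ b → epsFn q d a b = 0 := by
    intro h h'; unfold epsFn; split_ifs <;> omega
  rw [h0]
  split_ifs <;> omega

theorem G_zero_zero {q d a : ℤ} (hq : 2 ≤ q) (ha : 1 ≤ a) (haq : a ≤ q) :
    G q d 0 0 a = ch3 (q - 1 - a) := by
  unfold G
  have h0 : epsFn q d 0 a = 0 := by simp [epsFn]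
  rw [ch3_sFn_zero hq (by omega), ch3_sFn_zero hq (by omega), max_eq_right (ch3_nonneg _),
    max_eq_left (ch3_nonneg _), sFn_pos ha haq (by omega) (by omega), h0,
    if_pos (by omega), if_neg (by omega)]
  congr 1; ring

theorem G_zero_zero_zero {q d : ℤ} (hq : 2 ≤ q) : G q d 0 0 0 = 0 := by
  unfold G
  simp [ch3_sFn_zero hq]

/-- The gain in the summand when the maximal `s` is `q - 2 - m` instead of `q - 3 - m`. -/
def gain (q m : ℤ) : ℤ := ch3 (q - 2 - m) - ch3 (q - 3 - m)

/-- Value on positive triples. The four corrections describe the exceptional triples: `(m, m, m)`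
when `d ∤ m`, and the rotations of `(m, m + 1, m)` when `d ∣ m`. -/
theorem G_pos {q d i j k : ℤ} (hi : 1 ≤ i) (hiq : i ≤ q) (hj : 1 ≤ j) (hjq : j ≤ q)
    (hk : 1 ≤ k) (hkq : k ≤ q) :
    G q d i j k = ch3 (q - 3 - min i (min j k))
      + (if k = i ∧ j = i then (if d ∣ i then 0 else gain q i) else 0)
      + (if k = i ∧ j = i + 1 then (if d ∣ i then gain q i else 0) else 0)
      + (if i = j ∧ k = j + 1 then (if d ∣ j then gain q j else 0) else 0)
      + (if j = k ∧ i = k + 1 then (if d ∣ k then gain q k else 0) else 0) := by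
  -- By rotation invariance, it is enough to treat the case where the first index is minimal.
  have aux : ∀ i j k : ℤ, 1 ≤ i → i ≤ q → 1 ≤ j → j ≤ q → 1 ≤ k → k ≤ q → i ≤ j → i ≤ k →
      G q d i j k = ch3 (q - 3 - i)
      + (if k = i ∧ j = i then (if d ∣ i then 0 else gain q i) else 0)
      + (if k = i ∧ j = i + 1 then (if d ∣ i then gain q i else 0) else 0)
      + (if i = j ∧ k = j + 1 then (if d ∣ j then gain q j else 0) else 0) := by
    clear hi hiq hj hjq hk hkq i j k
    intro i j k hi hiq hj hjq hk hkq hij hik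
    obtain ⟨s1, h1⟩ : ∃ s, s = sFn q d i j k := ⟨_, rfl⟩
    obtain ⟨s2, h2⟩ : ∃ s, s = sFn q d j k i := ⟨_, rfl⟩
    obtain ⟨s3, h3⟩ : ∃ s, s = sFn q d k i j := ⟨_, rfl⟩
    -- The maximum of the three binomials is `ch3` of the maximum of the three arguments.
    have hs : ∀ t, (s1 ≤ t ∧ s2 ≤ t ∧ s3 ≤ t ∧ (t = s1 ∨ t = s2 ∨ t = s3)) →
        G q d i j k = ch3 t := by
      intro t ht
      simp only [G, ← ch3_mono.map_max, ← h1, ← h2, ← h3]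
      congr 1
      refine le_antisymm (max_le (max_le ht.1 ht.2.1) ht.2.2.1) ?_
      rcases ht.2.2.2 with h | h | h <;> simp [h]
    rw [sFn_pos hj hjq (by omega) hkq] at h1
    rw [sFn_pos hk hkq (by omega) hiq] at h2
    rw [sFn_pos hi hiq (by omega) hjq] at h3
    have e : ∀ x y : ℤ, 1 ≤ y →
        (x ≠ y → epsFn q d x y ≤ 0) ∧ (x + 1 ≠ y → 0 ≤ epsFn q d x y) := by
      intro x y h; unfold epsFn; split_ifs <;> omega
    have e0 : ∀ x : ℤ, epsFn q d x x = if d ∣ x then 0 else 1 := by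
      intro x; unfold epsFn; split_ifs <;> grind
    have e1 : ∀ x : ℤ, 1 ≤ x → epsFn q d x (x + 1) = if d ∣ x then 0 else -1 := by
      intro x hx; unfold epsFn; split_ifs <;> grind
    have b1 := eps_bounds q d i j
    have b2 := eps_bounds q d j k
    have b3 := eps_bounds q d k i
    by_cases c1 : k = i ∧ j = i
    · obtain ⟨rfl, rfl⟩ := c1
      rw [e0] at h1 h2 h3
      by_cases hd : d ∣ j
      · rw [hs (q - 3 - j) (by revert h1 h2 h3; simp only [hd, ↓reduceIte]; split_ifs <;> intros <;> omega)]
        simp [hd]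
      · rw [hs (q - 2 - j) (by revert h1 h2 h3; simp only [hd, ↓reduceIte]; split_ifs <;> intros <;> omega)]
        simp [hd, gain]
    by_cases c2 : k = i ∧ j = i + 1
    · obtain ⟨rfl, rfl⟩ := c2
      have n2 := e (k + 1) k hk
      rw [e1 _ hi] at h1
      rw [e0] at h3
      by_cases hd : d ∣ k
      · rw [hs (q - 2 - k) (by revert h1 h2 h3; simp only [hd, ↓reduceIte]; split_ifs <;> intros <;> omega)]
        simp [hd, gain]
      · rw [hs (q - 3 - k) (by revert h1 h2 h3; simp only [hd, ↓reduceIte]; split_ifs <;> intros <;> omega)]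
        simp [hd]
    by_cases c3 : i = j ∧ k = j + 1
    · obtain ⟨rfl, rfl⟩ := c3
      rw [e0] at h1
      have n3 := e (i + 1) i hi
      rw [e1 _ hi] at h2
      by_cases hd : d ∣ i
      · rw [hs (q - 2 - i) (by revert h1 h2 h3; simp only [hd, ↓reduceIte]; split_ifs <;> intros <;> omega)]
        simp [hd, gain]
      · rw [hs (q - 3 - i) (by revert h1 h2 h3; simp only [hd, ↓reduceIte]; split_ifs <;> intros <;> omega)]
        simp [hd]
    rw [if_neg c1, if_neg c2, if_neg c3, hs (q - 3 - i)]
    · ring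
    · have n1 := e i j hj
      have n2 := e j k
      have n3 := e k i
      revert h1 h2 h3; split_ifs <;> intros <;> omega
  rcases (by omega : (i ≤ j ∧ i ≤ k) ∨ (j ≤ k ∧ j ≤ i) ∨ (k ≤ i ∧ k ≤ j)) with h | h | h
  · rw [aux i j k hi hiq hj hjq hk hkq h.1 h.2, min_eq_left (le_min h.1 h.2),
      if_neg (show ¬(j = k ∧ i = k + 1) by omega)]
    ring
  · rw [G_rot, aux j k i hj hjq hk hkq hi hiq h.1 h.2, min_comm,
      min_assoc, min_eq_left (show j ≤ min k i from le_min h.1 h.2),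
      if_neg (show ¬(k = i ∧ j = i + 1) by omega)]
    by_cases c : i = j ∧ k = j
    · obtain ⟨rfl, rfl⟩ := c; simp
    · rw [if_neg c, if_neg (show ¬(k = i ∧ j = i) by omega)]; ring
  · rw [← G_rot, aux k i j hk hkq hi hiq hj hjq h.1 h.2, ← min_assoc, min_comm,
      min_eq_left (show k ≤ min i j from le_min h.1 h.2),
      if_neg (show ¬(i = j ∧ k = j + 1) by omega)]
    by_cases c : j = k ∧ i = k
    · obtain ⟨rfl, rfl⟩ := c; simp
    · rw [if_neg c, if_neg (show ¬(k = i ∧ j = i) by omega)]; ring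

/-! ### Summation lemmas -/

open Finset in
theorem sum_Icc_reflect_s13 (n : ℕ) (f : ℤ → ℤ) :
    ∑ i ∈ Icc (0 : ℤ) n, f i = f 0 + ∑ u ∈ range n, f (n - u) := by
  have h : ∑ i ∈ Icc (0 : ℤ) n, f i = ∑ u ∈ range (n + 1), f ((n : ℤ) - u) := by
    refine sum_nbij' (fun i => ((n : ℤ) - i).toNat) (fun u => (n : ℤ) - u) ?_ ?_ ?_ ?_ ?_ <;>
      intro a ha <;> simp only [mem_Icc, mem_range] at ha ⊢ <;> try omega
    congr 1; omega
  rw [h, sum_range_succ, sub_self, add_comm]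

/-- There are `(m + 1)³ - m³ = 3m² + 3m + 1` triples of naturals with maximum `m`. -/
theorem sum_max_three (n : ℕ) (h : ℕ → ℤ) :
    ∑ u ∈ Finset.range n, ∑ v ∈ Finset.range n, ∑ w ∈ Finset.range n, h (max u (max v w))
      = ∑ m ∈ Finset.range n, (3 * (m : ℤ) ^ 2 + 3 * m + 1) * h m := by
  induction n with
  | zero => simp
  | succ n ih =>
    have c1 : ∀ f : ℕ → ℕ, (∀ a < n, f a = n) →
        ∑ a ∈ Finset.range n, h (f a) = n * h n := by
      intro f hf
      rw [Finset.sum_congr rfl fun a ha => by rw [hf a (Finset.mem_range.1 ha)]]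
      simp
    have c2 : ∀ f : ℕ → ℕ → ℕ, (∀ a < n, ∀ b < n, f a b = n) →
        ∑ a ∈ Finset.range n, ∑ b ∈ Finset.range n, h (f a b) = n * (n * h n) := by
      intro f hf
      rw [Finset.sum_congr rfl fun a ha => c1 (f a) (hf a (Finset.mem_range.1 ha))]
      simp
    simp only [Finset.sum_range_succ, Finset.sum_add_distrib, ih, max_self]
    rw [c2 (fun a b => max n (max a b)) (by intros; omega),
      c2 (fun a b => max a (max n b)) (by intros; omega),
      c2 (fun a b => max a (max b n)) (by intros; omega),
      c1 (fun a => max n (max n a)) (by intros; omega),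
      c1 (fun a => max n (max a n)) (by intros; omega),
      c1 (fun a => max a n) (by intros; omega)]
    ring

/-- There are `(m + 1)² - m² = 2m + 1` pairs of naturals with maximum `m`. -/
theorem sum_max_two (n : ℕ) (h : ℕ → ℤ) :
    ∑ u ∈ Finset.range n, ∑ v ∈ Finset.range n, h (max u v)
      = ∑ m ∈ Finset.range n, (2 * (m : ℤ) + 1) * h m := by
  induction n with
  | zero => simp
  | succ n ih =>
    have c1 : ∀ f : ℕ → ℕ, (∀ a < n, f a = n) →
        ∑ a ∈ Finset.range n, h (f a) = n * h n := by
      intro f hf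
      rw [Finset.sum_congr rfl fun a ha => by rw [hf a (Finset.mem_range.1 ha)]]
      simp
    simp only [Finset.sum_range_succ, Finset.sum_add_distrib, ih, max_self]
    rw [c1 (fun a => max n a) (by intros; omega), c1 (fun a => max a n) (by intros; omega)]
    ring

theorem ch3_sub_three (u : ℕ) : 6 * ch3 ((u : ℤ) - 3) = u * (u - 1) * (u - 2) := by
  have h : ch3 ((u : ℤ) - 3) = (u.choose 3 : ℤ) := by
    unfold ch3
    rw [show ((u : ℤ) - 3 + 3).toNat = u by omega]
  rw [h]
  clear h
  induction u with
  | zero => simp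
  | succ u ih =>
    have h2 : 2 * (u.choose 2 : ℤ) = u * (u - 1) := by
      clear ih
      induction u with
      | zero => simp
      | succ u ih =>
        rw [Nat.choose_succ_succ' u 1, Nat.choose_one_right]
        push_cast
        linear_combination ih
    rw [Nat.choose_succ_succ' u 2]
    push_cast
    linear_combination ih + 3 * h2

/-- Only the multiples `v = d t` contribute to the left-hand side. -/
theorem sum_dvd (d : ℤ) (hd : 0 < d) (e : ℕ) :
    ∑ v ∈ Finset.range (d.toNat * e), (if d ∣ (v : ℤ) then ((v : ℤ) - 1) * (v - 2) else 0)
      = ∑ t ∈ Finset.range e, (d * t - 1) * (d * t - 2) := by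
  obtain ⟨m, rfl⟩ : ∃ m : ℕ, d = m + 1 := ⟨(d - 1).toNat, by omega⟩
  rw [show ((m : ℤ) + 1).toNat = m + 1 by omega]
  induction e with
  | zero => simp
  | succ e ih =>
    rw [Nat.mul_succ, Finset.sum_range_add, ih, Finset.sum_range_succ _ e, add_right_inj,
      Finset.sum_range_succ', Finset.sum_eq_zero]
    · simp
    · intro r hr
      rw [if_neg]
      rw [Nat.cast_add, Nat.cast_mul, Nat.cast_succ, Int.dvd_add_right (Dvd.intro _ rfl)]
      intro h
      have := Int.le_of_dvd (by positivity) h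
      simp at hr
      omega

theorem sum_closed (d : ℤ) (e : ℕ) :
    6 * ∑ t ∈ Finset.range e, (d * t - 1) * (d * t - 2)
      = d ^ 2 * (e - 1) * e * (2 * e - 1) - 9 * d * e * (e - 1) + 12 * e := by
  induction e with
  | zero => simp
  | succ e ih =>
    rw [Finset.sum_range_succ, mul_add, ih]
    push_cast
    ring

theorem sum_diag (n : ℕ) (a : ℕ → ℤ) :
    ∑ u ∈ Finset.range n, ∑ v ∈ Finset.range n, ∑ w ∈ Finset.range n,
      (if w = u ∧ v = u then a u else 0) = ∑ u ∈ Finset.range n, a u := by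
  refine Finset.sum_congr rfl fun u hu => ?_
  rw [Finset.sum_eq_single_of_mem u hu, Finset.sum_eq_single_of_mem u hu] <;> simp +contextual

/-- The hypothesis `c 0 = 0` accounts for `u = 0`, which has no predecessor `v`. -/
theorem sum_near_diag (n : ℕ) (c : ℕ → ℤ) (h0 : c 0 = 0) :
    ∑ u ∈ Finset.range n, ∑ v ∈ Finset.range n, ∑ w ∈ Finset.range n,
      (if w = u ∧ v + 1 = u then c u else 0) = ∑ u ∈ Finset.range n, c u := by
  refine Finset.sum_congr rfl fun u hu => ?_
  rcases u with _ | u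
  · simp [h0]
  · have hu' : u ∈ Finset.range n := by simp at hu ⊢; omega
    rw [Finset.sum_eq_single_of_mem u hu', Finset.sum_eq_single_of_mem (u + 1) hu] <;>
      simp +contextual

theorem sum_rot (n : ℕ) (F : ℕ → ℕ → ℕ → ℤ) :
    ∑ u ∈ Finset.range n, ∑ v ∈ Finset.range n, ∑ w ∈ Finset.range n, F v w u
      = ∑ u ∈ Finset.range n, ∑ v ∈ Finset.range n, ∑ w ∈ Finset.range n, F u v w := by
  rw [Finset.sum_comm]
  exact Finset.sum_congr rfl fun v _ => Finset.sum_comm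

/-! ### The sum in the reflected indices `u = q - i` -/

/-- The value `C(u, 3)`, written with `ch3`. -/
def h3 (u : ℕ) : ℤ := ch3 ((u : ℤ) - 3)

theorem six_mul_h3 (u : ℕ) : 6 * h3 u = u * (u - 1) * (u - 2) := ch3_sub_three u

section reflected

variable {n : ℕ} {d : ℤ}

theorem G_zero_refl (hn : 2 ≤ n) {v w : ℕ} (hv : v < n) (hw : w < n) :
    G n d 0 (n - v) (n - w) = h3 (max v w + 1) := by
  rw [G_zero (by omega) (by omega) (by omega) (by omega) (by omega), h3]
  congr 1
  push_cast
  omega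

theorem G_zero_zero_refl (hn : 2 ≤ n) {w : ℕ} (hw : w < n) :
    G n d 0 0 (n - w) = h3 (w + 2) := by
  rw [G_zero_zero (by omega) (by omega) (by omega), h3]
  congr 1
  push_cast
  ring

theorem gain_refl (u : ℕ) : gain n (n - u) = h3 (u + 1) - h3 u := by
  unfold gain h3
  congr 2 <;> push_cast <;> ring

theorem G_pos_refl (hd : d ∣ n + 1) {u v w : ℕ} (hu : u < n) (hv : v < n) (hw : w < n) :
    G n d (n - u) (n - v) (n - w) = h3 (max u (max v w))
      + (if w = u ∧ v = u then (if d ∣ u + 1 then 0 else h3 (u + 1) - h3 u) else 0)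
      + (if w = u ∧ v + 1 = u then (if d ∣ u + 1 then h3 (u + 1) - h3 u else 0) else 0)
      + (if u = v ∧ w + 1 = v then (if d ∣ v + 1 then h3 (v + 1) - h3 v else 0) else 0)
      + (if v = w ∧ u + 1 = w then (if d ∣ w + 1 then h3 (w + 1) - h3 w else 0) else 0) := by
  have key : ∀ t : ℕ, d ∣ (n : ℤ) - t ↔ d ∣ (t : ℤ) + 1 := by
    intro t
    rw [show (n : ℤ) - t = (n + 1) - (t + 1) by ring, dvd_sub_right hd]
  rw [G_pos (by omega) (by omega) (by omega) (by omega) (by omega) (by omega)]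
  simp only [key, gain_refl]
  congr 1
  · congr 1
    · congr 1
      · congr 1
        · rw [h3]; congr 1; push_cast; omega
        · exact if_congr (by omega) rfl rfl
      · exact if_congr (by omega) rfl rfl
    · exact if_congr (by omega) rfl rfl
  · exact if_congr (by omega) rfl rfl

end reflected

/-- The triple sum reduced to single sums, by the number of zero indices: three rotations of
`(0, a, b)`, three of `(0, 0, a)`, and nothing from `(0, 0, 0)`. -/
theorem sum_G (n : ℕ) (d : ℤ) (hn : 2 ≤ n) (hd : d ∣ n + 1) :
    ∑ i ∈ Finset.Icc (0 : ℤ) n, ∑ j ∈ Finset.Icc (0 : ℤ) n, ∑ k ∈ Finset.Icc (0 : ℤ) n, G n d i j k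
      = ∑ m ∈ Finset.range n, (3 * (m : ℤ) ^ 2 + 3 * m + 1) * h3 m
        + 3 * ∑ m ∈ Finset.range n, (2 * (m : ℤ) + 1) * h3 (m + 1)
        + 3 * ∑ m ∈ Finset.range n, h3 (m + 2)
        + ∑ u ∈ Finset.range n, (if d ∣ u + 1 then 0 else h3 (u + 1) - h3 u)
        + 3 * ∑ u ∈ Finset.range n, (if d ∣ u + 1 then h3 (u + 1) - h3 u else 0) := by
  have hm : ∀ {u}, u ∈ Finset.range n → u < n := fun h => Finset.mem_range.1 h
  have one : ∑ w ∈ Finset.range n, G n d 0 0 (n - w) = ∑ m ∈ Finset.range n, h3 (m + 2) :=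
    Finset.sum_congr rfl fun w hw => G_zero_zero_refl hn (hm hw)
  have two : ∑ v ∈ Finset.range n, ∑ w ∈ Finset.range n, G n d 0 (n - v) (n - w)
      = ∑ m ∈ Finset.range n, (2 * (m : ℤ) + 1) * h3 (m + 1) := by
    rw [← sum_max_two n (fun m => h3 (m + 1))]
    exact Finset.sum_congr rfl fun v hv => Finset.sum_congr rfl fun w hw =>
      G_zero_refl hn (hm hv) (hm hw)
  have three : ∑ u ∈ Finset.range n, ∑ v ∈ Finset.range n, ∑ w ∈ Finset.range n,
        G n d (n - u) (n - v) (n - w)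
      = ∑ m ∈ Finset.range n, (3 * (m : ℤ) ^ 2 + 3 * m + 1) * h3 m
        + ∑ u ∈ Finset.range n, (if d ∣ u + 1 then 0 else h3 (u + 1) - h3 u)
        + 3 * ∑ u ∈ Finset.range n, (if d ∣ u + 1 then h3 (u + 1) - h3 u else 0) := by
    rw [Finset.sum_congr rfl fun u hu => Finset.sum_congr rfl fun v hv =>
      Finset.sum_congr rfl fun w hw => G_pos_refl hd (hm hu) (hm hv) (hm hw)]
    have e := sum_near_diag n (fun u => if d ∣ (u : ℤ) + 1 then h3 (u + 1) - h3 u else 0)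
      (by simp [h3, ch3, Nat.choose])
    have r1 := sum_rot n (fun u v w => if w = u ∧ v + 1 = u then
      (if d ∣ (u : ℤ) + 1 then h3 (u + 1) - h3 u else 0) else 0)
    have r2 := sum_rot n (fun v w u => if w = u ∧ v + 1 = u then
      (if d ∣ (u : ℤ) + 1 then h3 (u + 1) - h3 u else 0) else 0)
    have e0 := sum_diag n (fun u => if d ∣ (u : ℤ) + 1 then 0 else h3 (u + 1) - h3 u)
    have eb := sum_max_three n h3
    simp only [Finset.sum_add_distrib, eb, e0, e]
    simp only [e] at r1 r2
    linarith
  simp only [sum_Icc_reflect_s13, Finset.sum_add_distrib]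
  have r1 : ∀ a, G n d 0 (n - a) 0 = G n d 0 0 (n - a) := fun a => by rw [← G_rot]
  have r2 : ∀ a, G n d (n - a) 0 0 = G n d 0 0 (n - a) := fun a => by rw [G_rot]
  have r3 : ∀ a b, G n d (n - a) (n - b) 0 = G n d 0 (n - a) (n - b) := fun a b => by rw [← G_rot]
  have r4 : ∀ a b, G n d (n - a) 0 (n - b) = G n d 0 (n - b) (n - a) := fun a b => by rw [G_rot]
  have hcomm : ∑ u ∈ Finset.range n, ∑ w ∈ Finset.range n, G n d 0 (n - w) (n - u)
      = ∑ v ∈ Finset.range n, ∑ w ∈ Finset.range n, G n d 0 (n - v) (n - w) := Finset.sum_comm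
  simp only [r1, r2, r3, r4, hcomm, one, two, three, G_zero_zero_zero (show (2 : ℤ) ≤ n by omega)]
  ring

/-! ### Closed forms -/

theorem sums_closed (n : ℕ) :
    20 * ∑ m ∈ Finset.range n, (3 * (m : ℤ) ^ 2 + 3 * m + 1) * (6 * h3 m)
        = 10 * (n : ℤ) ^ 6 - 54 * n ^ 5 + 75 * n ^ 4 - 25 * n ^ 2 - 6 * n
    ∧ 20 * ∑ m ∈ Finset.range n, (2 * (m : ℤ) + 1) * (6 * h3 (m + 1))
        = 8 * n ^ 5 - 15 * n ^ 4 - 10 * n ^ 3 + 15 * n ^ 2 + 2 * n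
    ∧ 20 * ∑ m ∈ Finset.range n, 6 * h3 (m + 2) = 5 * n ^ 4 + 10 * n ^ 3 - 5 * n ^ 2 - 10 * n
    ∧ 3 * ∑ m ∈ Finset.range n, (m : ℤ) * (m - 1) = n ^ 3 - 3 * n ^ 2 + 2 * n := by
  simp only [six_mul_h3]
  induction n with
  | zero => simp
  | succ n ih =>
    obtain ⟨i1, i2, i3, i4⟩ := ih
    simp only [Finset.sum_range_succ]
    push_cast at i1 i2 i3 i4 ⊢
    refine ⟨?_, ?_, ?_, ?_⟩
    · linear_combination i1
    · linear_combination i2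
    · linear_combination i3
    · linear_combination i4

/-- The sum of `u (u - 1)` over `u < n` with `d ∣ u + 1`, where `n + 1 = d e`: put `v = u + 1` and
remove the term `v = 0`, equal to `2`, from `sum_dvd`. -/
theorem sum_dvd_succ (d : ℤ) (hd : 0 < d) (n e : ℕ) (hne : (n : ℤ) + 1 = d * e) :
    6 * ∑ u ∈ Finset.range n, (if d ∣ (u : ℤ) + 1 then (u : ℤ) * (u - 1) else 0)
      = d ^ 2 * (e - 1) * e * (2 * e - 1) - 9 * d * e * (e - 1) + 12 * e - 12 := by
  have h := sum_dvd d hd e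
  have hn : d.toNat * e = n + 1 := by
    zify
    rw [Int.toNat_of_nonneg hd.le, hne]
  rw [hn, Finset.sum_range_succ'] at h
  have hs : ∑ u ∈ Finset.range n, (if d ∣ (u : ℤ) + 1 then (u : ℤ) * (u - 1) else 0)
      = ∑ k ∈ Finset.range n,
        (if d ∣ ((k + 1 : ℕ) : ℤ) then (((k + 1 : ℕ) : ℤ) - 1) * (((k + 1 : ℕ) : ℤ) - 2) else 0) := by
    refine Finset.sum_congr rfl fun u _ => ?_
    push_cast
    exact if_congr Iff.rfl (by ring) rfl
  rw [hs, ← sum_closed, ← h]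
  simp
  ring

/-- The number of Weierstrass gaps of a Hermitian triangle of type d:
24·d·N(T_d) = d·(2q⁶−6q⁵+9q⁴+12q³−35q²+18q) − 4(d−1)(q+1)(2q²−5q+5−d). -/
theorem gap_count_type_d (q d : ℤ) (hq : 2 ≤ q) (hd : 0 < d) (hdvd : d ∣ q + 1) :
    24 * d * ∑ i ∈ Finset.Icc (0 : ℤ) q, ∑ j ∈ Finset.Icc (0 : ℤ) q, ∑ k ∈ Finset.Icc (0 : ℤ) q,
        max (max (ch3 (sFn q d i j k)) (ch3 (sFn q d j k i))) (ch3 (sFn q d k i j))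
      = d * (2 * q ^ 6 - 6 * q ^ 5 + 9 * q ^ 4 + 12 * q ^ 3 - 35 * q ^ 2 + 18 * q)
        - 4 * (d - 1) * (q + 1) * (2 * q ^ 2 - 5 * q + 5 - d) := by
  obtain ⟨n, rfl⟩ : ∃ n : ℕ, q = n := ⟨q.toNat, by omega⟩
  have hG := sum_G n d (by omega) hdvd
  obtain ⟨e', he'⟩ := hdvd
  obtain ⟨e, rfl⟩ : ∃ e : ℕ, e' = e :=
    ⟨e'.toNat, by
      rw [Int.toNat_of_nonneg]
      by_contra hneg
      nlinarith⟩
  have hQ := sum_dvd_succ d hd n e he'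
  obtain ⟨hA, hB, hC, hE⟩ := sums_closed n
  have hstep : ∀ u : ℕ, 2 * (h3 (u + 1) - h3 u) = u * (u - 1) := by
    intro u
    have h1 := six_mul_h3 (u + 1)
    have h2 := six_mul_h3 u
    push_cast at h1
    linarith
  have hsplit : 2 * ∑ u ∈ Finset.range n, (if d ∣ (u : ℤ) + 1 then 0 else h3 (u + 1) - h3 u)
      = ∑ u ∈ Finset.range n, (u : ℤ) * (u - 1)
        - ∑ u ∈ Finset.range n, (if d ∣ (u : ℤ) + 1 then (u : ℤ) * (u - 1) else 0) := by
    rw [Finset.mul_sum, ← Finset.sum_sub_distrib]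
    refine Finset.sum_congr rfl fun u _ => ?_
    split_ifs
    · ring
    · rw [hstep]; ring
  have hdiv : 2 * ∑ u ∈ Finset.range n, (if d ∣ (u : ℤ) + 1 then h3 (u + 1) - h3 u else 0)
      = ∑ u ∈ Finset.range n, (if d ∣ (u : ℤ) + 1 then (u : ℤ) * (u - 1) else 0) := by
    rw [Finset.mul_sum]
    refine Finset.sum_congr rfl fun u _ => ?_
    split_ifs
    · exact hstep u
    · rfl
  simp only [mul_left_comm _ (6 : ℤ), ← Finset.mul_sum] at hA hB hC
  unfold G at hG
  rw [hG]
  -- With `n = d e - 1` both sides become polynomials in `d` and `e`.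
  have hn : (n : ℤ) = d * e - 1 := by linarith
  have main : 24 * (∑ m ∈ Finset.range n, (3 * (m : ℤ) ^ 2 + 3 * m + 1) * h3 m
        + 3 * ∑ m ∈ Finset.range n, (2 * (m : ℤ) + 1) * h3 (m + 1)
        + 3 * ∑ m ∈ Finset.range n, h3 (m + 2)
        + ∑ u ∈ Finset.range n, (if d ∣ (u : ℤ) + 1 then 0 else h3 (u + 1) - h3 u)
        + 3 * ∑ u ∈ Finset.range n, (if d ∣ (u : ℤ) + 1 then h3 (u + 1) - h3 u else 0))
      = 2 * n ^ 6 - 6 * n ^ 5 + 9 * n ^ 4 + 4 * n ^ 3 - 11 * n ^ 2 + 2 * n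
        + 4 * (d ^ 2 * (e - 1) * e * (2 * e - 1) - 9 * d * e * (e - 1) + 12 * e - 12) := by
    linarith
  rw [mul_comm (24 : ℤ) d, mul_assoc, main, hn]
  ring
end

section
/- Let q ≥ 2 be an integer and d a positive divisor of q+1. Then 120·d · Σ_{i=0}^{q} Σ_{j=0}^{q} Σ_{k=0}^{q} min{ C(s_d(i,j,k)+3, 3), C(s_d(j,k,i)+3, 3), C(s_d(k,i,j)+3, 3) } = d·(q⁶ + 3q⁵ − 15q⁴ − 75q³ + 254q² − 168q) + 10(d−1)(q+1)(2q² − 5q + 5 − d). (In the paper, this sum is the number #G₀(P,Q,R) of pure gaps of a Hermitian triangle {P,Q,R} of type d, i.e., of effective divisors aP+bQ+cR having basepoints at all three points.) -/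
/-- The summand: the number of pure gaps in the residue class `(i, j, k)`. -/
def gapTerm (q d i j k : ℤ) : ℤ :=
  min (min (ch3 (sFn q d i j k)) (ch3 (sFn q d j k i))) (ch3 (sFn q d k i j))

theorem gapTerm_rotate (q d i j k : ℤ) : gapTerm q d i j k = gapTerm q d j k i := by
  unfold gapTerm
  rw [min_assoc, min_comm]

theorem six_mul_ch3 (s : ℤ) (hs : -3 ≤ s) : 6 * ch3 s = (s + 3) * (s + 2) * (s + 1) := by
  obtain ⟨n, hn⟩ := Int.eq_ofNat_of_zero_le (show 0 ≤ s + 3 by omega)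
  obtain rfl : s = n - 3 := by omega
  have h : (6 : ℤ) * (n.choose 3 : ℤ) = n * (n - 1) * (n - 2) := by
    clear hn hs
    induction n with
    | zero => simp
    | succ n ih =>
      have h2 : ((n.choose 2 : ℕ) : ℤ) * 2 = n * (n - 1) := by
        have := Nat.triangle_succ n
        have h3 := Nat.choose_two_right n
        have h4 : n.choose 2 * 2 = n * (n - 1) := by
          rw [h3]; exact Nat.div_mul_cancel (Nat.even_mul_pred_self n).two_dvd
        rcases n with _ | n
        · simp
        · have h5 := congrArg (Nat.cast (R := ℤ)) h4
          push_cast at h5 ⊢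
          simpa using h5
      rw [Nat.choose_succ_succ' n 2]
      push_cast
      linear_combination ih + 3 * h2
  have e : ((n : ℤ) - 3 + 3).toNat = n := by omega
  unfold ch3
  rw [e, h]
  ring

/-- The value `s_d(k, 0, j)` is negative, because its numerator `ε_d(k, 0) - j - 1` is, and `ch3`
vanishes there. -/
theorem gapTerm_zero (q d j k : ℤ) (hq : 0 ≤ q) (hj : 0 ≤ j) :
    gapTerm q d 0 j k = 0 := by
  have he : epsFn q d k 0 ≤ 0 := by
    unfold epsFn
    split_ifs with h1 h2
    · exact absurd (h1.2 ▸ dvd_zero d) h1.1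
    all_goals omega
  have hs : sFn q d k 0 j < 0 := by
    unfold sFn sigmaFn
    rw [if_pos rfl, Int.fdiv_eq_ediv_of_nonneg _ (by omega)]
    exact Int.ediv_neg_of_neg_of_pos (by omega) (by omega)
  have h0 : ch3 (sFn q d k 0 j) = 0 := by
    unfold ch3
    rw [Nat.choose_eq_zero_of_lt]
    · rfl
    · omega
  rw [gapTerm, h0]
  exact min_eq_right (le_min (ch3_nonneg _) (ch3_nonneg _))

/-- Explicit form of `s_d` away from `0`. The numerator is
`(q - 2 - j + [i < j]) * (q + 1) + (j + ε - k - 1)`, and the last summand lies in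
`[-(q + 1), q]`, so it contributes `-1` exactly when `j + ε ≤ k`. -/
theorem sFn_eq (q d i j k : ℤ) (hj : 1 ≤ j) (hj' : j ≤ q) (hk : 0 ≤ k) (hk' : k ≤ q) :
    sFn q d i j k = q - 2 - j + (if i < j then 1 else 0)
      - (if j ≤ k ∧ ¬ (¬ d ∣ i ∧ j = i ∧ k = i) ∨ (¬ d ∣ i ∧ j = i + 1 ∧ k = i) then 1 else 0) := by
  have hcond : (j ≤ k ∧ ¬ (¬ d ∣ i ∧ j = i ∧ k = i) ∨ (¬ d ∣ i ∧ j = i + 1 ∧ k = i)) ↔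
      j + epsFn q d i j ≤ k := by
    unfold epsFn
    by_cases h : d ∣ i
    · simp [h]
    · simp only [h, not_false_eq_true, true_and]
      split_ifs <;> omega
  simp only [hcond]
  have he : epsFn q d i j ≤ 1 ∧ -1 ≤ epsFn q d i j := by
    unfold epsFn; split_ifs <;> omega
  unfold sFn sigmaFn
  rw [if_neg (by omega), Int.fdiv_eq_ediv_of_nonneg _ (by omega)]
  generalize epsFn q d i j = e at he
  have key : ∀ a b : ℤ, b * (q + 1) ≤ a → a < (b + 1) * (q + 1) → a / (q + 1) = b := by
    intro a b h1 h2
    apply le_antisymm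
    · exact Int.lt_add_one_iff.mp (Int.ediv_lt_of_lt_mul (by omega) h2)
    · exact (Int.le_ediv_iff_mul_le (by omega)).mpr h1
  apply key <;> split_ifs <;> nlinarith

/-- `min` commutes with the monotone function `ch3`, so a summand is `ch3` of a minimum. -/
theorem gapTerm_eq (q d i j k : ℤ) : gapTerm q d i j k =
    ch3 (min (min (sFn q d i j k) (sFn q d j k i)) (sFn q d k i j)) := by
  rw [gapTerm, ch3_mono.map_min, ch3_mono.map_min]

/-- Only one coordinate attains the maximum `n`. -/
theorem gapTerm_single (q d n i j : ℤ) (hi : 1 ≤ i) (hj : 1 ≤ j) (hin : i < n) (hjn : j < n)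
    (hn : n ≤ q) : 6 * gapTerm q d n i j =
      (q + 2 - n) * (q + 1 - n) * (q - n)
        - if i = n - 1 then if j = n - 1 then 3 * (q + 1 - n) * (q - n) else 0 else 0 := by
  have h : min (min (sFn q d n i j) (sFn q d i j n)) (sFn q d j n i) =
      q - 1 - n - if i = n - 1 then if j = n - 1 then 1 else 0 else 0 := by
    rw [sFn_eq _ _ _ _ _ hi (by omega) (by omega) (by omega),
      sFn_eq _ _ _ _ _ hj (by omega) (by omega) (by omega),
      sFn_eq _ _ _ _ _ (by omega) (by omega) (by omega) (by omega)]
    by_cases hn : d ∣ n <;> by_cases hi : d ∣ i <;> by_cases hj : d ∣ j <;>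
      simp only [hn, hi, hj, not_true_eq_false, not_false_eq_true, true_and, false_and,
        and_true, or_false] <;>
      split_ifs <;> omega
  rw [gapTerm_eq, h, six_mul_ch3 _ (by split_ifs <;> omega)]
  split_ifs <;> ring

/-- Exactly two coordinates attain the maximum `n`. -/
theorem gapTerm_double (q d n i : ℤ) (hi : 1 ≤ i) (hin : i < n) (hn : n ≤ q) :
    6 * gapTerm q d n n i = (q + 1 - n) * (q - n) * (q - n - 1) := by
  have h : min (min (sFn q d n n i) (sFn q d n i n)) (sFn q d i n n) = q - 2 - n := by
    rw [sFn_eq _ _ _ _ _ (by omega) (by omega) (by omega) (by omega),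
      sFn_eq _ _ _ _ _ hi (by omega) (by omega) (by omega),
      sFn_eq _ _ _ _ _ (by omega) (by omega) (by omega) (by omega)]
    by_cases hn : d ∣ n <;> by_cases hi : d ∣ i <;>
      simp only [hn, hi, not_true_eq_false, not_false_eq_true, true_and, false_and,
        and_true, or_false] <;>
      split_ifs <;> omega
  rw [gapTerm_eq, h, six_mul_ch3 _ (by omega)]
  ring

/-- The diagonal is the only place where the summand depends on `d`. -/
theorem gapTerm_diag (q d n : ℤ) (hn0 : 1 ≤ n) (hn : n ≤ q) :
    6 * gapTerm q d n n n = (q - n) * (q - n - 1) * (q - n - 2)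
      + if d ∣ n then 0 else 3 * (q - n) * (q - n - 1) := by
  have h : min (min (sFn q d n n n) (sFn q d n n n)) (sFn q d n n n) =
      q - 3 - n + if d ∣ n then 0 else 1 := by
    rw [sFn_eq _ _ _ _ _ (by omega) (by omega) (by omega) (by omega)]
    by_cases hn : d ∣ n <;> simp [hn] <;> omega
  rw [gapTerm_eq, h, six_mul_ch3 _ (by split_ifs <;> omega)]
  split_ifs <;> ring

theorem sum_Icc_int (f : ℤ → ℤ) (Q : ℕ) :
    ∑ i ∈ Finset.Icc (0 : ℤ) Q, f i = ∑ n ∈ Finset.range Q, f (n + 1) + f 0 := by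
  induction Q with
  | zero => simp
  | succ Q ih =>
    have : Finset.Icc (0 : ℤ) ((Q + 1 : ℕ) : ℤ) = insert ((Q : ℤ) + 1) (Finset.Icc (0 : ℤ) Q) := by
      ext x; simp only [Finset.mem_insert, Finset.mem_Icc]; push_cast; omega
    rw [this, Finset.sum_insert (by simp), ih, Finset.sum_range_succ]
    ring

/-- Decomposition of a cube into a smaller cube and the shell around it, for a
cyclically symmetric summand. -/
theorem sum_cube_succ_s18 (F : ℕ → ℕ → ℕ → ℤ) (hF : ∀ a b c, F a b c = F b c a) (N : ℕ) :
    ∑ a ∈ Finset.range (N + 1), ∑ b ∈ Finset.range (N + 1), ∑ c ∈ Finset.range (N + 1), F a b c =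
      ∑ a ∈ Finset.range N, ∑ b ∈ Finset.range N, ∑ c ∈ Finset.range N, F a b c
      + 3 * ∑ a ∈ Finset.range N, ∑ b ∈ Finset.range N, F N a b
      + 3 * ∑ a ∈ Finset.range N, F N N a + F N N N := by
  have h1 : ∑ a ∈ Finset.range N, ∑ b ∈ Finset.range N, F a b N =
      ∑ a ∈ Finset.range N, ∑ b ∈ Finset.range N, F N a b :=
    Finset.sum_congr rfl fun a _ => Finset.sum_congr rfl fun b _ => (hF N a b).symm
  have h2 : ∑ a ∈ Finset.range N, ∑ b ∈ Finset.range N, F a N b =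
      ∑ a ∈ Finset.range N, ∑ b ∈ Finset.range N, F N a b := by
    rw [Finset.sum_comm]
    exact Finset.sum_congr rfl fun b _ => Finset.sum_congr rfl fun a _ => hF a N b
  have h3 : ∑ a ∈ Finset.range N, F N a N = ∑ a ∈ Finset.range N, F N N a :=
    Finset.sum_congr rfl fun a _ => (hF N N a).symm
  have h4 : ∑ a ∈ Finset.range N, F a N N = ∑ a ∈ Finset.range N, F N N a :=
    Finset.sum_congr rfl fun a _ => hF a N N
  simp only [Finset.sum_range_succ, Finset.sum_add_distrib]
  linear_combination h1 + h2 + h3 + h4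

/-- The sum over all triples with coordinates in `[1, N]`. The polynomial part does not involve
`d`; its increment from `N` to `N + 1` is the shell of triples with largest coordinate `N + 1`. The
exceptional triples, the rotations of `(n, n - 1, n - 1)`, exist only for `n ≥ 2`, so the formula
does not extend to `N = 0`. -/
theorem sum_cube (q d : ℤ) (N : ℕ) (hN : 1 ≤ N) (hNq : (N : ℤ) ≤ q) :
    120 * ∑ a ∈ Finset.range N, ∑ b ∈ Finset.range N, ∑ c ∈ Finset.range N,
        gapTerm q d (a + 1) (b + 1) (c + 1) =
      (- 180 * q + 180 * q ^ 2 + 12 * N + 94 * N * q - 210 * N * q ^ 2 - 20 * N ^ 2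
        + 225 * N ^ 2 * q - 75 * N ^ 2 * q ^ 2 - 90 * N ^ 3 + 90 * N ^ 3 * q + 30 * N ^ 3 * q ^ 2
        + 20 * N ^ 3 * q ^ 3 - 30 * N ^ 4 - 45 * N ^ 4 * q - 45 * N ^ 4 * q ^ 2 + 18 * N ^ 5
        + 36 * N ^ 5 * q - 10 * N ^ 6)
      + 60 * ∑ n ∈ Finset.range N,
        (if d ∣ ((n : ℤ) + 1) then 0 else (q - (n + 1)) * (q - (n + 1) - 1)) := by
  induction N, hN using Nat.le_induction with
  | base =>
    have h := gapTerm_diag q d 1 le_rfl (by exact_mod_cast hNq)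
    simp only [Finset.sum_range_one, Nat.cast_zero, zero_add, Nat.cast_one]
    split_ifs at h ⊢ <;> linear_combination 20 * h
  | succ N hN ih =>
    specialize ih (by push_cast at hNq; omega)
    push_cast at hNq
    obtain ⟨M, rfl⟩ := Nat.exists_eq_add_of_le' hN
    have hd := gapTerm_diag q d ((M + 1 : ℕ) + 1) (by omega) (by omega)
    have h2 : 6 * ∑ a ∈ Finset.range (M + 1),
        gapTerm q d ((M + 1 : ℕ) + 1) ((M + 1 : ℕ) + 1) (a + 1) =
        (M + 1) * ((q - M - 1) * (q - M - 2) * (q - M - 3)) := by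
      rw [Finset.mul_sum, Finset.sum_congr rfl fun a ha => gapTerm_double q d _ _ (by omega)
        (by have := Finset.mem_range.mp ha; push_cast; omega) (by push_cast; omega)]
      simp only [Finset.sum_const, Finset.card_range, nsmul_eq_mul]
      push_cast
      ring
    have h1 : 6 * ∑ a ∈ Finset.range (M + 1), ∑ b ∈ Finset.range (M + 1),
        gapTerm q d ((M + 1 : ℕ) + 1) (a + 1) (b + 1) =
        (M + 1) ^ 2 * ((q - M) * (q - M - 1) * (q - M - 2)) - 3 * (q - M - 1) * (q - M - 2) := by
      have : ∀ a ∈ Finset.range (M + 1), ∀ b ∈ Finset.range (M + 1),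
          6 * gapTerm q d ((M + 1 : ℕ) + 1) (a + 1) (b + 1) =
          (q - M) * (q - M - 1) * (q - M - 2) -
            if a = M then if b = M then 3 * (q - M - 1) * (q - M - 2) else 0 else 0 := by
        intro a ha b hb
        rw [Finset.mem_range] at ha hb
        rw [gapTerm_single q d _ _ _ (by omega) (by omega) (by omega) (by omega) (by omega)]
        have e1 : ((a : ℤ) + 1 = ((M + 1 : ℕ) : ℤ) + 1 - 1) ↔ a = M := by omega
        have e2 : ((b : ℤ) + 1 = ((M + 1 : ℕ) : ℤ) + 1 - 1) ↔ b = M := by omega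
        simp only [e1, e2]
        push_cast
        split_ifs <;> ring
      simp only [Finset.mul_sum]
      rw [Finset.sum_congr rfl fun a ha => Finset.sum_congr rfl (this a ha)]
      simp [Finset.sum_sub_distrib, Finset.sum_ite_eq']
      ring
    rw [sum_cube_succ_s18 (fun a b c => gapTerm q d (a + 1) (b + 1) (c + 1))
      (fun a b c => gapTerm_rotate _ _ _ _ _), Finset.sum_range_succ _ (M + 1)]
    push_cast at ih h1 h2 hd ⊢
    split_ifs at hd ⊢ <;> linear_combination ih + 60 * h1 + 60 * h2 + 20 * hd

theorem sum_multiples (f : ℤ → ℤ) (d e : ℕ) (hd : 0 < d) :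
    ∑ n ∈ Finset.range (d * e), (if (d : ℤ) ∣ (n : ℤ) then f n else 0) =
      ∑ t ∈ Finset.range e, f (d * t) := by
  induction e with
  | zero => simp
  | succ e ih =>
    rw [Nat.mul_succ, Finset.sum_range_add, ih, Finset.sum_range_succ]
    congr 1
    rw [Finset.sum_eq_single_of_mem 0 (by simpa using hd)]
    · simp
    · intro r hr hr0
      rw [if_neg]
      intro h
      push_cast at h
      rw [Int.dvd_add_right (dvd_mul_right _ _)] at h
      have := Nat.le_of_dvd (by omega) (Int.natCast_dvd_natCast.mp h)
      rw [Finset.mem_range] at hr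
      omega

theorem pure_gap_count (q d : ℤ) (hq : 2 ≤ q) (hd : 0 < d) (hdvd : d ∣ q + 1) :
    120 * d * ∑ i ∈ Finset.Icc (0 : ℤ) q, ∑ j ∈ Finset.Icc (0 : ℤ) q, ∑ k ∈ Finset.Icc (0 : ℤ) q,
        min (min (ch3 (sFn q d i j k)) (ch3 (sFn q d j k i))) (ch3 (sFn q d k i j))
      = d * (q ^ 6 + 3 * q ^ 5 - 15 * q ^ 4 - 75 * q ^ 3 + 254 * q ^ 2 - 168 * q)
        + 10 * (d - 1) * (q + 1) * (2 * q ^ 2 - 5 * q + 5 - d) := by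
  lift q to ℕ using by omega
  lift d to ℕ using hd.le
  obtain ⟨e, he⟩ := hdvd
  lift e to ℕ using by nlinarith
  change 120 * (d : ℤ) * ∑ i ∈ Finset.Icc (0 : ℤ) q, ∑ j ∈ Finset.Icc (0 : ℤ) q,
    ∑ k ∈ Finset.Icc (0 : ℤ) q, gapTerm q d i j k = _
  have hq' : ∀ n : ℕ, (0 : ℤ) ≤ n + 1 := fun n => by positivity
  -- Summands with a zero coordinate vanish.
  have hcube : ∑ i ∈ Finset.Icc (0 : ℤ) q, ∑ j ∈ Finset.Icc (0 : ℤ) q,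
      ∑ k ∈ Finset.Icc (0 : ℤ) q, gapTerm q d i j k =
      ∑ a ∈ Finset.range q, ∑ b ∈ Finset.range q, ∑ c ∈ Finset.range q,
        gapTerm q d (a + 1) (b + 1) (c + 1) := by
    have z1 : ∀ j k : ℤ, 0 ≤ j → gapTerm q d 0 j k = 0 :=
      fun j k => gapTerm_zero _ _ _ _ (by positivity)
    have z2 : ∀ i k : ℤ, 0 ≤ k → gapTerm q d i 0 k = 0 :=
      fun i k hk => by rw [gapTerm_rotate, z1 _ _ hk]
    have z3 : ∀ i j : ℤ, 0 ≤ i → gapTerm q d i j 0 = 0 :=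
      fun i j hi => by rw [gapTerm_rotate, gapTerm_rotate, z1 _ _ hi]
    simp only [sum_Icc_int]
    simp [z1, z2, z3, hq']
  have hmul := sum_multiples (fun x => ((q : ℤ) - x) * (q - x - 1)) d e (by exact_mod_cast hd)
  have hqe : d * e = q + 1 := by exact_mod_cast he.symm
  rw [hqe, Finset.sum_range_succ'] at hmul
  have hE : ∀ E : ℕ, 6 * ∑ t ∈ Finset.range E, ((q : ℤ) - d * t) * (q - d * t - 1) =
      6 * E * (q * (q - 1)) - 3 * d * (2 * q - 1) * (E * (E - 1))
        + d ^ 2 * ((E - 1) * E * (2 * E - 1)) := by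
    intro E
    induction E with
    | zero => simp
    | succ E ih =>
      rw [Finset.sum_range_succ, mul_add, ih]
      push_cast
      ring
  have hall : ∀ N : ℕ, 6 * ∑ n ∈ Finset.range N, ((q : ℤ) - (n + 1)) * (q - (n + 1) - 1) =
      6 * N * (q * (q - 1)) - 3 * (2 * q - 1) * (N * (N + 1)) + N * (N + 1) * (2 * N + 1) := by
    intro N
    induction N with
    | zero => simp
    | succ N ih =>
      rw [Finset.sum_range_succ, mul_add, ih]
      push_cast
      ring
  have hsplit : ∑ n ∈ Finset.range q, (if (d : ℤ) ∣ ((n : ℤ) + 1) then 0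
        else ((q : ℤ) - (n + 1)) * (q - (n + 1) - 1)) =
      ∑ n ∈ Finset.range q, ((q : ℤ) - (n + 1)) * (q - (n + 1) - 1)
      - ∑ n ∈ Finset.range q, (if (d : ℤ) ∣ ((n : ℤ) + 1) then
        ((q : ℤ) - (n + 1)) * (q - (n + 1) - 1) else 0) := by
    rw [← Finset.sum_sub_distrib]
    exact Finset.sum_congr rfl fun n _ => by split_ifs <;> simp
  have hmain := sum_cube q d q (by omega) le_rfl
  rw [hsplit] at hmain
  have hEe := hE e
  have hallq := hall q
  push_cast at hmul
  simp only [dvd_zero, if_true, sub_zero] at hmul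
  rw [hcube]
  have hq1 : (q : ℤ) = d * e - 1 := by linarith
  generalize (∑ n ∈ Finset.range q, ((q : ℤ) - (n + 1)) * (q - (n + 1) - 1)) = X at *
  generalize (∑ t ∈ Finset.range e, ((q : ℤ) - d * t) * (q - d * t - 1)) = Y at *
  -- `Y` runs over all multiples of `d` in `[0, q]`, including `0`, which is removed here.
  rw [mul_right_comm, hmain, eq_sub_of_add_eq hmul]
  have h60 : 60 * (X - (Y - q * (q - 1))) = 10 * (6 * X) - 10 * (6 * Y) + 60 * (q * (q - 1)) := by
    ring
  rw [h60, hallq, hEe, hq1]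
  ring
end
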